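/- arXiv:2006.10580 — 5 statements merged into one kernel-verified Lean document; each statement's English description precedes it below -/
import Mathlib

section
/- Let M = (M_k) be a nondecreasing logarithmically convex sequence of positive real numbers with M_0 = 1 such that sup_k (M_{k+1}/M_k)^{1/k} < ∞, Σ_{k≥0} 1/((k+1) M_k^{1/k}) = ∞ (C_M is closed under differentiation and quasianalytic), and sup_k M_k^{1/k} = ∞ (C_M properly contains the class of real-analytic functions). Then there exists a C^∞ function F : ℝ² → ℝ such that F ∈ C_{M^{(2)}}(ℝ²), F ∉ C_M(ℝ²), and F∘σ ∈ C_M(ℝ²). -/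
/-!
The function is a series of rational bumps `F = ∑ c_l t_l⁶ / P_l`, where
`P_l (x, y) = t_l⁶ + t_l² (x - t_l)² + y²` (`blk`). With `m_l = M (l + 1) / M l ≥ 1`, the bump of
index `l` sits at `(t_l, 0)` with `t_l = m_l ^ (-1/2)` (`tSeq`) and has amplitude
`c_l = 2⁻ˡ M_l / m_l ^ l` (`ampSeq`). Log-convexity gives `c_l m_l ^ n ≤ 2⁻ˡ M_n` for all `n`
(`ampSeq_bound`).

*Upper bounds.* A bound `|∂^α P| ≤ P R ^ |α|` passes to `1 / P` with `R` replaced by `4 R`, up to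
the factor `α!` (`tc_inv_bound`): the Leibniz rule for `P * P⁻¹ = 1` is a recursion for the Taylor
coefficients of `P⁻¹`. In Cartesian coordinates the bump at distance `t` from the origin has
`R = 2 t⁻³` (`blk_bound`), and `t⁻³ ≤ t⁻⁴ = m²`, so that `F ∈ C_{M^{(2)}}`. It has width `t³` in `y`
and `t²` in `x`; the angular width is `t³ / t = t²`, so in polar coordinates `R = 16 t⁻² = 16 m`
(`blk_blowup_bound`) and `F ∘ σ ∈ C_M`. Both memberships follow from `series_memDC`.

*Lower bound.* On the axis `y = 0` one has `∂_y^{2k} (1 / P_l) = (-1)^k (2k)! P_l ^ (-(k + 1))`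
(`tc_blk_inv`), whose sign does not depend on `l`. The series for `∂_y^{2k} F` thus has no
cancellation, and at the centre of the bump of index `n = 2k` it is at least
`(2k)! c_n t_n ^ (-6k) = (2k)! 4⁻ᵏ M_{2k} m_{2k} ^ k`. If `F` were in `C_M`, then `m_{2k}` would be
bounded, hence so would `M_k ^ (1 / k)` (`ratio_unbounded`), against the proper containment of the
analytic class.
-/

open Real Filter Topology
open scoped Classical
noncomputable section
def pd1 (f : ℝ × ℝ → ℝ) : ℝ × ℝ → ℝ := fun x => fderiv ℝ f x (1, 0)
def pd2 (f : ℝ × ℝ → ℝ) : ℝ × ℝ → ℝ := fun x => fderiv ℝ f x (0, 1)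
def pd (α : ℕ × ℕ) (f : ℝ × ℝ → ℝ) : ℝ × ℝ → ℝ := pd1^[α.1] (pd2^[α.2] f)
def LogConvexSeq (M : ℕ → ℝ) : Prop := Monotone (fun k => M (k + 1) / M k)
def MemDC (M : ℕ → ℝ) (f : ℝ × ℝ → ℝ) : Prop :=
  ContDiff ℝ (⊤ : ℕ∞) f ∧
  ∀ K : Set (ℝ × ℝ), IsCompact K →
    ∃ A > (0:ℝ), ∃ B > (0:ℝ), ∀ x ∈ K, ∀ α : ℕ × ℕ,
      |pd α f x| ≤ A * B ^ (α.1 + α.2) * (Nat.factorial α.1 * Nat.factorial α.2) * M (α.1 + α.2)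
def blowup : ℝ × ℝ → ℝ × ℝ := fun p => (p.1 * Real.cos p.2, p.1 * Real.sin p.2)
def ostrowski (M : ℕ → ℝ) (r : ℝ) : ℝ := ⨆ n : ℕ, r ^ (n + 2) / M n
def baseH (M : ℕ → ℝ) (x : ℝ × ℝ) : ℝ :=
  ∑' k : ℕ,
    (M (k + 2) / M (k + 1)) ^ 2 / (2 ^ (k + 1) * ostrowski M (M (k + 2) / M (k + 1))) *
      (1 / (x.1 ^ 2 + (M (k + 2) / M (k + 1) * x.2) ^ 2 + 1))
def blockF (M : ℕ → ℝ) (q ρ : ℝ) (x : ℝ × ℝ) : ℝ := baseH M (x.1 / ρ - q, x.2 / ρ)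
def rhoSeq (M : ℕ → ℝ) (n : ℕ) : ℝ := M n / M (n + 1)
def FGamma (M : ℕ → ℝ) (E : ℝ → ℝ) (Λ : Set ℕ) (x : ℝ × ℝ) : ℝ :=
  ∑' l : ℕ, Set.indicator Λ
    (fun l => blockF M (E (rhoSeq M l) / rhoSeq M l) (rhoSeq M l) x /
      (ostrowski M (rhoSeq M l)⁻¹ * 2 ^ l)) l

/-! ### Partial derivatives and the Leibniz rule -/

lemma pd1_contDiff {f : ℝ × ℝ → ℝ} (hf : ContDiff ℝ (⊤ : ℕ∞) f) :
    ContDiff ℝ (⊤ : ℕ∞) (pd1 f) :=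
  (hf.fderiv_right (m := (⊤ : ℕ∞)) (by simp)).clm_apply contDiff_const

lemma pd2_contDiff {f : ℝ × ℝ → ℝ} (hf : ContDiff ℝ (⊤ : ℕ∞) f) :
    ContDiff ℝ (⊤ : ℕ∞) (pd2 f) :=
  (hf.fderiv_right (m := (⊤ : ℕ∞)) (by simp)).clm_apply contDiff_const

lemma pd1_iter_contDiff {f : ℝ × ℝ → ℝ} (hf : ContDiff ℝ (⊤ : ℕ∞) f) (n : ℕ) :
    ContDiff ℝ (⊤ : ℕ∞) (pd1^[n] f) := by
  induction n with
  | zero => exact hf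
  | succ n ih => rw [Function.iterate_succ_apply']; exact pd1_contDiff ih

lemma pd2_iter_contDiff {f : ℝ × ℝ → ℝ} (hf : ContDiff ℝ (⊤ : ℕ∞) f) (n : ℕ) :
    ContDiff ℝ (⊤ : ℕ∞) (pd2^[n] f) := by
  induction n with
  | zero => exact hf
  | succ n ih => rw [Function.iterate_succ_apply']; exact pd2_contDiff ih

lemma differentiable_of_top {f : ℝ × ℝ → ℝ} (hf : ContDiff ℝ (⊤ : ℕ∞) f) :
    Differentiable ℝ f := hf.differentiable (by simp)

lemma pd1_of_hasDerivAt {f : ℝ × ℝ → ℝ} (hf : ContDiff ℝ (⊤ : ℕ∞) f) {p : ℝ × ℝ} {d : ℝ}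
    (h : HasDerivAt (fun s => f (s, p.2)) d p.1) : pd1 f p = d := by
  have h1 : HasDerivAt (fun s : ℝ => ((s, p.2) : ℝ × ℝ)) (1, 0) p.1 :=
    (hasDerivAt_id p.1).prodMk (hasDerivAt_const _ _)
  have h2 := ((differentiable_of_top hf) (p.1, p.2)).hasFDerivAt.comp_hasDerivAt p.1 h1
  exact h2.unique h

lemma pd2_of_hasDerivAt {f : ℝ × ℝ → ℝ} (hf : ContDiff ℝ (⊤ : ℕ∞) f) {p : ℝ × ℝ} {d : ℝ}
    (h : HasDerivAt (fun s => f (p.1, s)) d p.2) : pd2 f p = d := by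
  have h1 : HasDerivAt (fun s : ℝ => ((p.1, s) : ℝ × ℝ)) (0, 1) p.2 :=
    (hasDerivAt_const _ _).prodMk (hasDerivAt_id p.2)
  have h2 := ((differentiable_of_top hf) (p.1, p.2)).hasFDerivAt.comp_hasDerivAt p.2 h1
  exact h2.unique h

lemma slice1_contDiff {f : ℝ × ℝ → ℝ} (hf : ContDiff ℝ (⊤ : ℕ∞) f) (y : ℝ) :
    ContDiff ℝ (⊤ : ℕ∞) (fun s => f (s, y)) := by fun_prop

lemma slice2_contDiff {f : ℝ × ℝ → ℝ} (hf : ContDiff ℝ (⊤ : ℕ∞) f) (x : ℝ) :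
    ContDiff ℝ (⊤ : ℕ∞) (fun s => f (x, s)) := by fun_prop

lemma pd1_iter_eq {f : ℝ × ℝ → ℝ} (hf : ContDiff ℝ (⊤ : ℕ∞) f) (n : ℕ) (x y : ℝ) :
    pd1^[n] f (x, y) = iteratedDeriv n (fun s => f (s, y)) x := by
  induction n generalizing f with
  | zero => simp
  | succ n ih =>
    rw [Function.iterate_succ_apply, ih (pd1_contDiff hf), iteratedDeriv_succ']
    congr 1
    funext s
    exact pd1_of_hasDerivAt hf
      (((slice1_contDiff hf y).differentiable (by simp)) s).hasDerivAt

lemma pd2_iter_eq {f : ℝ × ℝ → ℝ} (hf : ContDiff ℝ (⊤ : ℕ∞) f) (n : ℕ) (x y : ℝ) :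
    pd2^[n] f (x, y) = iteratedDeriv n (fun s => f (x, s)) y := by
  induction n generalizing f with
  | zero => simp
  | succ n ih =>
    rw [Function.iterate_succ_apply, ih (pd2_contDiff hf), iteratedDeriv_succ']
    congr 1
    funext s
    exact pd2_of_hasDerivAt hf
      (((slice2_contDiff hf x).differentiable (by simp)) s).hasDerivAt

lemma natCast_le_top (n : ℕ) : (n : WithTop ℕ∞) ≤ ((⊤ : ℕ∞) : WithTop ℕ∞) := by
  exact_mod_cast le_top

/-- Symmetry of the second derivative. -/
lemma pd_comm {f : ℝ × ℝ → ℝ} (hf : ContDiff ℝ (⊤ : ℕ∞) f) : pd1 (pd2 f) = pd2 (pd1 f) := by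
  funext p
  have hd : DifferentiableAt ℝ (fderiv ℝ f) p :=
    (hf.fderiv_right (m := (⊤ : ℕ∞)) (by simp)).differentiable (by simp) p
  have hs : IsSymmSndFDerivAt ℝ f p := hf.contDiffAt.isSymmSndFDerivAt (by
    rw [minSmoothness_of_isRCLikeNormedField]
    exact natCast_le_top 2)
  have key : ∀ v w : ℝ × ℝ, fderiv ℝ (fun x => fderiv ℝ f x v) p w
      = fderiv ℝ (fderiv ℝ f) p w v := by
    intro v w
    rw [fderiv_clm_apply hd (differentiableAt_const v)]
    simp
  change fderiv ℝ (fun x => fderiv ℝ f x (0, 1)) p (1, 0)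
    = fderiv ℝ (fun x => fderiv ℝ f x (1, 0)) p (0, 1)
  rw [key, key]
  exact hs _ _

lemma pd2_iter_pd1 {f : ℝ × ℝ → ℝ} (hf : ContDiff ℝ (⊤ : ℕ∞) f) (n : ℕ) :
    pd2^[n] (pd1 f) = pd1 (pd2^[n] f) := by
  induction n generalizing f with
  | zero => rfl
  | succ n ih =>
    rw [Function.iterate_succ_apply, ← pd_comm hf, ih (pd2_contDiff hf),
      ← Function.iterate_succ_apply]

lemma pd_pd1 {f : ℝ × ℝ → ℝ} (hf : ContDiff ℝ (⊤ : ℕ∞) f) (α : ℕ × ℕ) :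
    pd α (pd1 f) = pd (α.1 + 1, α.2) f := by
  simp only [pd]
  rw [pd2_iter_pd1 hf, Function.iterate_succ_apply]

lemma pd_pd2 (f : ℝ × ℝ → ℝ) (α : ℕ × ℕ) :
    pd α (pd2 f) = pd (α.1, α.2 + 1) f := by
  simp only [pd]
  rw [Function.iterate_succ_apply]

/-- Taylor coefficient of `f` at `p`, indexed by `(a, b)`. -/
def tc (a b : ℕ) (f : ℝ × ℝ → ℝ) (p : ℝ × ℝ) : ℝ :=
  pd (a, b) f p / (Nat.factorial a * Nat.factorial b)

lemma choose_div {n i : ℕ} (hi : i ∈ Finset.range (n + 1)) (u v : ℝ) :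
    (n.choose i : ℝ) * u * v = Nat.factorial n *
      ((u / Nat.factorial i) * (v / Nat.factorial (n - i))) := by
  have hi' : i ≤ n := Nat.lt_succ_iff.mp (Finset.mem_range.mp hi)
  rw [Nat.cast_choose ℝ hi']
  field_simp

/-- The Leibniz rule in two variables: the Taylor coefficients of a product are the Cauchy
product of those of the factors. -/
lemma tc_mul {f g : ℝ × ℝ → ℝ} (hf : ContDiff ℝ (⊤ : ℕ∞) f) (hg : ContDiff ℝ (⊤ : ℕ∞) g)
    (a b : ℕ) (p : ℝ × ℝ) :
    tc a b (f * g) p = ∑ j ∈ Finset.range (b + 1), ∑ i ∈ Finset.range (a + 1),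
      tc i j f p * tc (a - i) (b - j) g p := by
  obtain ⟨x, y⟩ := p
  have hfg : ContDiff ℝ (⊤ : ℕ∞) (f * g) := hf.mul hg
  have h2 : ∀ s, pd2^[b] (f * g) (s, y) = ∑ j ∈ Finset.range (b + 1),
      (Nat.factorial b / (Nat.factorial j * Nat.factorial (b - j)) : ℝ) *
        ((fun s => pd2^[j] f (s, y)) * (fun s => pd2^[b - j] g (s, y))) s := by
    intro s
    rw [pd2_iter_eq hfg]
    have := iteratedDeriv_mul (n := b) (x := y)
      ((slice2_contDiff hf s).contDiffAt.of_le (by exact_mod_cast le_top))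
      ((slice2_contDiff hg s).contDiffAt.of_le (by exact_mod_cast le_top))
    refine this.trans (Finset.sum_congr rfl fun j hj => ?_)
    rw [choose_div hj, Pi.mul_apply, pd2_iter_eq hf, pd2_iter_eq hg]
    field_simp
  have hF : ∀ j, ContDiff ℝ (⊤ : ℕ∞) (fun s => pd2^[j] f (s, y)) := fun j =>
    slice1_contDiff (pd2_iter_contDiff hf j) y
  have hG : ∀ j, ContDiff ℝ (⊤ : ℕ∞) (fun s => pd2^[j] g (s, y)) := fun j =>
    slice1_contDiff (pd2_iter_contDiff hg j) y
  unfold tc pd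
  simp only
  rw [pd1_iter_eq (pd2_iter_contDiff hfg b), funext h2, iteratedDeriv_fun_sum]
  · rw [Finset.sum_div]
    refine Finset.sum_congr rfl fun j hj => ?_
    rw [iteratedDeriv_const_mul_field, iteratedDeriv_mul
      ((hF j).contDiffAt.of_le (by exact_mod_cast le_top))
      ((hG (b - j)).contDiffAt.of_le (by exact_mod_cast le_top)), Finset.mul_sum, Finset.sum_div]
    refine Finset.sum_congr rfl fun i hi => ?_
    rw [choose_div hi, pd1_iter_eq (pd2_iter_contDiff hf j),
      pd1_iter_eq (pd2_iter_contDiff hg (b - j))]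
    field_simp
  · intro j _
    exact (contDiff_const.mul ((hF j).mul (hG (b - j)))).contDiffAt.of_le
      (by exact_mod_cast le_top)

lemma pd_const_mul {f : ℝ × ℝ → ℝ} (hf : ContDiff ℝ (⊤ : ℕ∞) f) (c : ℝ) (α : ℕ × ℕ)
    (p : ℝ × ℝ) : pd α (fun q => c * f q) p = c * pd α f p := by
  have h1 : ∀ g : ℝ × ℝ → ℝ, ContDiff ℝ (⊤ : ℕ∞) g →
      pd2 (fun q => c * g q) = fun q => c * pd2 g q := by
    intro g hg
    funext q
    simp only [pd2]
    rw [fderiv_const_mul (differentiable_of_top hg q)]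
    rfl
  have h2 : ∀ g : ℝ × ℝ → ℝ, ContDiff ℝ (⊤ : ℕ∞) g →
      pd1 (fun q => c * g q) = fun q => c * pd1 g q := by
    intro g hg
    funext q
    simp only [pd1]
    rw [fderiv_const_mul (differentiable_of_top hg q)]
    rfl
  have h3 : ∀ n, pd2^[n] (fun q => c * f q) = fun q => c * pd2^[n] f q := by
    intro n
    induction n with
    | zero => rfl
    | succ n ih =>
      rw [Function.iterate_succ_apply', Function.iterate_succ_apply', ih,
        h1 _ (pd2_iter_contDiff hf n)]
  have h4 : ∀ n, pd1^[n] (fun q => c * pd2^[α.2] f q)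
      = fun q => c * pd1^[n] (pd2^[α.2] f) q := by
    intro n
    induction n with
    | zero => rfl
    | succ n ih =>
      rw [Function.iterate_succ_apply', Function.iterate_succ_apply', ih,
        h2 _ (pd1_iter_contDiff (pd2_iter_contDiff hf _) n)]
  simp only [pd]
  rw [h3, h4]

/-! ### Reciprocals -/

lemma geom_quarter_le (n : ℕ) : ∑ i ∈ Finset.range n, ((1 : ℝ) / 4) ^ i ≤ 4 / 3 := by
  rw [geom_sum_eq (by norm_num)]
  have : (0 : ℝ) ≤ (1 / 4) ^ n := by positivity
  rw [div_le_iff_of_neg (by norm_num)]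
  linarith

lemma tc_one {a b : ℕ} (hab : a + b ≠ 0) (p : ℝ × ℝ) :
    tc a b (fun _ : ℝ × ℝ => (1 : ℝ)) p = 0 := by
  obtain ⟨x, y⟩ := p
  have hc : ContDiff ℝ (⊤ : ℕ∞) (fun _ : ℝ × ℝ => (1 : ℝ)) := contDiff_const
  unfold tc pd
  simp only
  rw [pd1_iter_eq (pd2_iter_contDiff hc b)]
  simp only [pd2_iter_eq hc, iteratedDeriv_const]
  by_cases hb0 : b = 0
  · have ha0 : a ≠ 0 := by omega
    simp [hb0, ha0]
  · simp [hb0]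

/-- Reciprocals preserve geometric bounds on Taylor coefficients relative to the value. The
recursion `∑ d_β u_{α-β} = 0` obtained from `D * D⁻¹ = 1` gives the bound by induction, because
`∑_{β ≠ 0} 4^{-|β|} ≤ 16/9 - 1 ≤ 1`. -/
lemma tc_inv_bound {D : ℝ × ℝ → ℝ} (hD : ContDiff ℝ (⊤ : ℕ∞) D) (hpos : ∀ q, 0 < D q)
    {R : ℝ} (hR : 0 < R) (p : ℝ × ℝ)
    (hb : ∀ a b : ℕ, |tc a b D p| ≤ D p * R ^ (a + b)) (a b : ℕ) :
    |tc a b (fun q => (D q)⁻¹) p| ≤ (D p)⁻¹ * (4 * R) ^ (a + b) := by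
  have hu : ContDiff ℝ (⊤ : ℕ∞) (fun q => (D q)⁻¹) := hD.inv fun q => (hpos q).ne'
  have hone : D * (fun q => (D q)⁻¹) = fun _ => (1 : ℝ) := by
    funext q
    exact mul_inv_cancel₀ (hpos q).ne'
  have hDp := hpos p
  induction hn : a + b using Nat.strong_induction_on generalizing a b with
  | _ n ih =>
  by_cases h0 : n = 0
  · obtain ⟨rfl, rfl⟩ : a = 0 ∧ b = 0 := by omega
    subst hn
    simp [tc, pd, abs_of_pos hDp]
  have hz := tc_one (a := a) (b := b) (by omega) p
  have hL := tc_mul hD hu a b p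
  rw [hone, hz] at hL
  -- a common bound for every term of the Cauchy product other than the one with `β = 0`
  set s := Finset.range (b + 1) ×ˢ Finset.range (a + 1) with hs
  set U := (D p)⁻¹ * (4 * R) ^ n with hU
  have hUpos : 0 < U := by positivity
  rw [← Finset.sum_product' (f := fun j i => tc i j D p *
    tc (a - i) (b - j) (fun q => (D q)⁻¹) p)] at hL
  have hmem : ((0, 0) : ℕ × ℕ) ∈ s := by simp [hs]
  rw [← Finset.add_sum_erase s _ hmem] at hL
  have h00 : tc 0 0 D p = D p := by simp [tc, pd]
  simp only [h00, Nat.sub_zero] at hL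
  have hterm : ∀ x ∈ s.erase (0, 0), |tc x.2 x.1 D p *
      tc (a - x.2) (b - x.1) (fun q => (D q)⁻¹) p| ≤ D p * U * ((1 / 4) ^ x.1 * (1 / 4) ^ x.2) := by
    rintro ⟨j, i⟩ hx
    simp only [hs, Finset.mem_erase, Finset.mem_product, Finset.mem_range, ne_eq,
      Prod.mk.injEq] at hx
    obtain ⟨hne, hj, hi⟩ := hx
    have hlt : (a - i) + (b - j) < n := by omega
    have h1 := ih _ hlt (a - i) (b - j) rfl
    rw [abs_mul]
    refine (mul_le_mul (hb i j) h1 (abs_nonneg _) (by positivity)).trans_eq ?_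
    have hsplit : n = (i + j) + ((a - i) + (b - j)) := by omega
    rw [hU]
    conv_rhs => rw [hsplit]
    have h4 : ((1 : ℝ) / 4) ^ j * (1 / 4) ^ i * 4 ^ (i + j) = 1 := by
      rw [← pow_add, add_comm j i, ← mul_pow]; norm_num
    rw [pow_add (4 * R) (i + j), mul_pow 4 R (i + j)]
    calc D p * R ^ (i + j) * ((D p)⁻¹ * (4 * R) ^ (a - i + (b - j)))
        = (D p * R ^ (i + j) * ((D p)⁻¹ * (4 * R) ^ (a - i + (b - j)))) *
          ((1 / 4) ^ j * (1 / 4) ^ i * 4 ^ (i + j)) := by rw [h4, mul_one]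
      _ = _ := by ring
  have hsum : ∑ x ∈ s.erase (0, 0), ((1 : ℝ) / 4) ^ x.1 * (1 / 4) ^ x.2 ≤ 1 := by
    have h1 := Finset.add_sum_erase s (fun x : ℕ × ℕ => ((1 : ℝ) / 4) ^ x.1 * (1 / 4) ^ x.2) hmem
    have h2 : ∑ x ∈ s, ((1 : ℝ) / 4) ^ x.1 * (1 / 4) ^ x.2
        = (∑ j ∈ Finset.range (b + 1), ((1 : ℝ) / 4) ^ j) *
          ∑ i ∈ Finset.range (a + 1), ((1 : ℝ) / 4) ^ i := by
      rw [Finset.sum_mul_sum, hs, Finset.sum_product]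
    have h3 := mul_le_mul (geom_quarter_le (b + 1)) (geom_quarter_le (a + 1))
      (by positivity) (by norm_num)
    simp only [pow_zero, mul_one] at h1
    linarith
  have habs : |D p * tc a b (fun q => (D q)⁻¹) p| ≤ D p * U := by
    rw [eq_neg_of_add_eq_zero_left hL.symm, abs_neg]
    calc _ ≤ ∑ x ∈ s.erase (0, 0), |tc x.2 x.1 D p *
          tc (a - x.2) (b - x.1) (fun q => (D q)⁻¹) p| := Finset.abs_sum_le_sum_abs _ _
      _ ≤ ∑ x ∈ s.erase (0, 0), D p * U * ((1 / 4) ^ x.1 * (1 / 4) ^ x.2) :=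
          Finset.sum_le_sum hterm
      _ = D p * U * ∑ x ∈ s.erase (0, 0), ((1 : ℝ) / 4) ^ x.1 * (1 / 4) ^ x.2 := by
          rw [Finset.mul_sum]
      _ ≤ D p * U := by
          have : 0 < D p * U := by positivity
          nlinarith
  rw [abs_mul, abs_of_pos hDp] at habs
  exact le_of_mul_le_mul_left habs hDp

/-! ### Series of smooth functions -/

/-- A sequence of smooth functions each of whose partial derivatives is dominated, uniformly on
the plane, by a summable sequence. -/
def GoodFam (g : ℕ → ℝ × ℝ → ℝ) : Prop :=
  (∀ l, ContDiff ℝ (⊤ : ℕ∞) (g l)) ∧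
    ∀ α, ∃ u : ℕ → ℝ, Summable u ∧ ∀ l x, |pd α (g l) x| ≤ u l

lemma GoodFam.pd1 {g : ℕ → ℝ × ℝ → ℝ} (hg : GoodFam g) : GoodFam (fun l => pd1 (g l)) := by
  refine ⟨fun l => pd1_contDiff (hg.1 l), fun α => ?_⟩
  obtain ⟨u, hu, h⟩ := hg.2 (α.1 + 1, α.2)
  exact ⟨u, hu, fun l x => by rw [pd_pd1 (hg.1 l)]; exact h l x⟩

lemma GoodFam.pd2 {g : ℕ → ℝ × ℝ → ℝ} (hg : GoodFam g) : GoodFam (fun l => pd2 (g l)) := by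
  refine ⟨fun l => pd2_contDiff (hg.1 l), fun α => ?_⟩
  obtain ⟨u, hu, h⟩ := hg.2 (α.1, α.2 + 1)
  exact ⟨u, hu, fun l x => by rw [pd_pd2]; exact h l x⟩

lemma clm_decomp (L : ℝ × ℝ →L[ℝ] ℝ) (v : ℝ × ℝ) : L v = v.1 * L (1, 0) + v.2 * L (0, 1) := by
  have : v = v.1 • ((1, 0) : ℝ × ℝ) + v.2 • ((0, 1) : ℝ × ℝ) := by ext <;> simp
  conv_lhs => rw [this]
  rw [map_add, map_smul, map_smul, smul_eq_mul, smul_eq_mul]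

lemma clm_norm_le (L : ℝ × ℝ →L[ℝ] ℝ) : ‖L‖ ≤ |L (1, 0)| + |L (0, 1)| := by
  refine L.opNorm_le_bound (by positivity) fun v => ?_
  rw [clm_decomp L v, Real.norm_eq_abs]
  refine (abs_add_le _ _).trans ?_
  rw [abs_mul, abs_mul]
  have h1 : |v.1| ≤ ‖v‖ := norm_fst_le v
  have h2 : |v.2| ≤ ‖v‖ := norm_snd_le v
  nlinarith [abs_nonneg (L (1, 0)), abs_nonneg (L (0, 1))]

lemma GoodFam.fderiv_bound {g : ℕ → ℝ × ℝ → ℝ} (hg : GoodFam g) :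
    ∃ u : ℕ → ℝ, Summable u ∧ ∀ l x, ‖fderiv ℝ (g l) x‖ ≤ u l := by
  obtain ⟨u, hu, h⟩ := hg.2 (1, 0)
  obtain ⟨w, hw, h'⟩ := hg.2 (0, 1)
  exact ⟨fun l => u l + w l, hu.add hw, fun l x =>
    (clm_norm_le _).trans (add_le_add (h l x) (h' l x))⟩

lemma GoodFam.hasFDerivAt {g : ℕ → ℝ × ℝ → ℝ} (hg : GoodFam g) (x : ℝ × ℝ) :
    HasFDerivAt (fun y => ∑' l, g l y) (∑' l, fderiv ℝ (g l) x) x := by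
  obtain ⟨u, hu, h⟩ := hg.fderiv_bound
  obtain ⟨w, hw, h'⟩ := hg.2 (0, 0)
  exact hasFDerivAt_tsum hu (fun l x => (differentiable_of_top (hg.1 l) x).hasFDerivAt) h
    (Summable.of_norm_bounded hw fun l => h' l x) x

lemma GoodFam.fderiv_apply {g : ℕ → ℝ × ℝ → ℝ} (hg : GoodFam g) (x v : ℝ × ℝ) :
    fderiv ℝ (fun y => ∑' l, g l y) x v = ∑' l, fderiv ℝ (g l) x v := by
  obtain ⟨u, hu, h⟩ := hg.fderiv_bound
  rw [(hg.hasFDerivAt x).fderiv]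
  exact (ContinuousLinearMap.apply ℝ ℝ v).map_tsum (Summable.of_norm_bounded hu fun l => h l x)

lemma GoodFam.pd1_tsum {g : ℕ → ℝ × ℝ → ℝ} (hg : GoodFam g) :
    _root_.pd1 (fun y => ∑' l, g l y) = fun x => ∑' l, _root_.pd1 (g l) x :=
  funext fun x => hg.fderiv_apply x (1, 0)

lemma GoodFam.pd2_tsum {g : ℕ → ℝ × ℝ → ℝ} (hg : GoodFam g) :
    _root_.pd2 (fun y => ∑' l, g l y) = fun x => ∑' l, _root_.pd2 (g l) x :=
  funext fun x => hg.fderiv_apply x (0, 1)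

lemma GoodFam.contDiff {g : ℕ → ℝ × ℝ → ℝ} (hg : GoodFam g) :
    ContDiff ℝ (⊤ : ℕ∞) (fun y => ∑' l, g l y) := by
  rw [contDiff_infty]
  intro n
  induction n generalizing g with
  | zero =>
    refine contDiff_zero.mpr (Differentiable.continuous (𝕜 := ℝ) fun x => ?_)
    exact (hg.hasFDerivAt x).differentiableAt
  | succ n ih =>
    have hrep : fderiv ℝ (fun y => ∑' l, g l y) = fun x =>
        (∑' l, _root_.pd1 (g l) x) • ContinuousLinearMap.fst ℝ ℝ ℝ
          + (∑' l, _root_.pd2 (g l) x) • ContinuousLinearMap.snd ℝ ℝ ℝ := by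
      funext x
      ext
      · have := congrFun hg.pd1_tsum x
        simpa [_root_.pd1] using this
      · have := congrFun hg.pd2_tsum x
        simpa [_root_.pd2] using this
    push_cast
    rw [contDiff_succ_iff_fderiv]
    refine ⟨fun x => (hg.hasFDerivAt x).differentiableAt, by simp, ?_⟩
    rw [hrep]
    exact ((ih hg.pd1).smul contDiff_const).add ((ih hg.pd2).smul contDiff_const)

lemma GoodFam.pd_tsum {g : ℕ → ℝ × ℝ → ℝ} (hg : GoodFam g) (α : ℕ × ℕ) :
    pd α (fun y => ∑' l, g l y) = fun x => ∑' l, pd α (g l) x := by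
  have h2 : ∀ n, GoodFam (fun l => _root_.pd2^[n] (g l)) ∧
      _root_.pd2^[n] (fun y => ∑' l, g l y) = fun x => ∑' l, _root_.pd2^[n] (g l) x := by
    intro n
    induction n with
    | zero => exact ⟨hg, rfl⟩
    | succ n ih =>
      simp only [Function.iterate_succ_apply']
      exact ⟨ih.1.pd2, by rw [ih.2, ih.1.pd2_tsum]⟩
  have h1 : ∀ n, GoodFam (fun l => _root_.pd1^[n] (_root_.pd2^[α.2] (g l))) ∧
      _root_.pd1^[n] (fun y => ∑' l, _root_.pd2^[α.2] (g l) y)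
        = fun x => ∑' l, _root_.pd1^[n] (_root_.pd2^[α.2] (g l)) x := by
    intro n
    induction n with
    | zero => exact ⟨(h2 α.2).1, rfl⟩
    | succ n ih =>
      simp only [Function.iterate_succ_apply']
      exact ⟨ih.1.pd1, by rw [ih.2, ih.1.pd1_tsum]⟩
  simp only [pd]
  rw [(h2 α.2).2, (h1 α.1).2]

/-- Derivative estimate for one summand `d / D`. -/
lemma pd_block_bound {D : ℝ × ℝ → ℝ} (hD : ContDiff ℝ (⊤ : ℕ∞) D) (hpos : ∀ q, 0 < D q)
    {R : ℝ} (hR : 0 < R)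
    (hb : ∀ p, ∀ a b : ℕ, |pd (a, b) D p| ≤ D p * R ^ (a + b))
    {d c : ℝ} (hd : 0 ≤ d) (hdc : ∀ q, d ≤ c * D q) (p : ℝ × ℝ) (α : ℕ × ℕ) :
    |pd α (fun q => d * (D q)⁻¹) p|
      ≤ c * (4 * R) ^ (α.1 + α.2) * (Nat.factorial α.1 * Nat.factorial α.2) := by
  have hu : ContDiff ℝ (⊤ : ℕ∞) (fun q => (D q)⁻¹) := hD.inv fun q => (hpos q).ne'
  have hDp := hpos p
  have hfac : ∀ n : ℕ, (1 : ℝ) ≤ Nat.factorial n := fun n => by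
    exact_mod_cast Nat.succ_le_of_lt (Nat.factorial_pos n)
  have h := tc_inv_bound hD hpos hR p (fun a b => by
    have hf : (1 : ℝ) ≤ Nat.factorial a * Nat.factorial b :=
      one_le_mul_of_one_le_of_one_le (hfac a) (hfac b)
    rw [tc, abs_div, abs_of_pos (by linarith : (0 : ℝ) < Nat.factorial a * Nat.factorial b)]
    exact (div_le_self (abs_nonneg _) hf).trans (hb p a b)) α.1 α.2
  have hfp : (0 : ℝ) < Nat.factorial α.1 * Nat.factorial α.2 := by positivity
  rw [tc, abs_div, abs_of_pos hfp, div_le_iff₀ hfp] at h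
  rw [pd_const_mul hu, abs_mul, abs_of_nonneg hd]
  have hdc' : d * (D p)⁻¹ ≤ c := by
    rw [← div_eq_mul_inv, div_le_iff₀ hDp]; exact hdc p
  calc d * |pd α (fun q => (D q)⁻¹) p|
      ≤ d * ((D p)⁻¹ * (4 * R) ^ (α.1 + α.2) * (Nat.factorial α.1 * Nat.factorial α.2)) :=
        mul_le_mul_of_nonneg_left h hd
    _ = d * (D p)⁻¹ * ((4 * R) ^ (α.1 + α.2) * (Nat.factorial α.1 * Nat.factorial α.2)) := by
        ring
    _ ≤ c * ((4 * R) ^ (α.1 + α.2) * (Nat.factorial α.1 * Nat.factorial α.2)) :=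
        mul_le_mul_of_nonneg_right hdc' (by positivity)
    _ = _ := by ring

/-- Series of blocks `d l / D l` of frequency `R l` and amplitude `c l` lie in the class of the
weight `W` as soon as `c l * (4 * R l) ^ n ≤ 2⁻ˡ B ^ n W n`. -/
lemma series_memDC {D : ℕ → ℝ × ℝ → ℝ} (hD : ∀ l, ContDiff ℝ (⊤ : ℕ∞) (D l))
    (hpos : ∀ l q, 0 < D l q) {R d c : ℕ → ℝ} (hR : ∀ l, 0 < R l)
    (hb : ∀ l p, ∀ a b : ℕ, |pd (a, b) (D l) p| ≤ D l p * R l ^ (a + b))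
    (hd : ∀ l, 0 ≤ d l) (hdc : ∀ l q, d l ≤ c l * D l q) {B : ℝ} (hB : 0 < B) {W : ℕ → ℝ}
    (hW : ∀ l n, c l * (4 * R l) ^ n ≤ (1 / 2) ^ l * (B ^ n * W n)) :
    GoodFam (fun l q => d l * (D l q)⁻¹) ∧ MemDC W (fun q => ∑' l, d l * (D l q)⁻¹) := by
  have hbd : ∀ (α : ℕ × ℕ) l x, |pd α (fun q => d l * (D l q)⁻¹) x|
      ≤ (1 / 2) ^ l *
        (B ^ (α.1 + α.2) * W (α.1 + α.2) * (Nat.factorial α.1 * Nat.factorial α.2)) := by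
    intro α l x
    refine (pd_block_bound (hD l) (hpos l) (hR l) (hb l) (hd l) (hdc l) x α).trans ?_
    have hf : (0 : ℝ) ≤ Nat.factorial α.1 * Nat.factorial α.2 := by positivity
    exact (mul_le_mul_of_nonneg_right (hW l _) hf).trans_eq (by ring)
  have hgood : GoodFam (fun l q => d l * (D l q)⁻¹) :=
    ⟨fun l => contDiff_const.mul ((hD l).inv fun q => (hpos l q).ne'), fun α =>
      ⟨_, summable_geometric_two.mul_right _, fun l x => hbd α l x⟩⟩
  refine ⟨hgood, hgood.contDiff, fun K _ => ⟨2, two_pos, B, hB, fun x _ α => ?_⟩⟩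
  rw [hgood.pd_tsum]
  have hs : HasSum (fun l : ℕ => ((1 : ℝ) / 2) ^ l *
      (B ^ (α.1 + α.2) * W (α.1 + α.2) * (Nat.factorial α.1 * Nat.factorial α.2)))
      (2 * (B ^ (α.1 + α.2) * W (α.1 + α.2) * (Nat.factorial α.1 * Nat.factorial α.2))) :=
    hasSum_geometric_two.mul_right _
  refine (tsum_of_norm_bounded (f := fun l => pd α (fun q => d l * (D l q)⁻¹) x) hs
    fun l => hbd α l x).trans_eq ?_
  ring

/-! ### Derivatives of quadratic polynomials with variable coefficients -/

/-- The `a`-th derivative in `r` of the quadratic polynomial `A r² + B r + C`. -/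
def quad (a : ℕ) (A B C r : ℝ) : ℝ :=
  match a with
  | 0 => A * r ^ 2 + B * r + C
  | 1 => 2 * A * r + B
  | 2 => 2 * A
  | _ => 0

lemma quad_contDiff (a : ℕ) {A B C : ℝ → ℝ} (hA : ContDiff ℝ (⊤ : ℕ∞) A)
    (hB : ContDiff ℝ (⊤ : ℕ∞) B) (hC : ContDiff ℝ (⊤ : ℕ∞) C) :
    ContDiff ℝ (⊤ : ℕ∞) (fun p : ℝ × ℝ => quad a (A p.2) (B p.2) (C p.2) p.1) := by
  match a with
  | 0 => simp only [quad]; fun_prop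
  | 1 => simp only [quad]; fun_prop
  | 2 => simp only [quad]; fun_prop
  | _ + 3 => simp only [quad]; fun_prop

/-- Partial derivatives of a quadratic polynomial in the first variable whose coefficients
depend on the second one; `A b`, `B b`, `C b` are the `b`-th derivatives of the coefficients. -/
lemma pd_quad {A B C : ℕ → ℝ → ℝ} (hA : ∀ b, ContDiff ℝ (⊤ : ℕ∞) (A b))
    (hB : ∀ b, ContDiff ℝ (⊤ : ℕ∞) (B b)) (hC : ∀ b, ContDiff ℝ (⊤ : ℕ∞) (C b))
    (dA : ∀ b y, HasDerivAt (A b) (A (b + 1) y) y)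
    (dB : ∀ b y, HasDerivAt (B b) (B (b + 1) y) y)
    (dC : ∀ b y, HasDerivAt (C b) (C (b + 1) y) y) (a b : ℕ) :
    pd (a, b) (fun p : ℝ × ℝ => quad 0 (A 0 p.2) (B 0 p.2) (C 0 p.2) p.1)
      = fun p : ℝ × ℝ => quad a (A b p.2) (B b p.2) (C b p.2) p.1 := by
  have h2 : ∀ b, pd2^[b] (fun p : ℝ × ℝ => quad 0 (A 0 p.2) (B 0 p.2) (C 0 p.2) p.1)
      = fun p : ℝ × ℝ => quad 0 (A b p.2) (B b p.2) (C b p.2) p.1 := by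
    intro b
    induction b with
    | zero => rfl
    | succ b ih =>
      rw [Function.iterate_succ_apply', ih]
      funext p
      refine pd2_of_hasDerivAt (quad_contDiff 0 (hA b) (hB b) (hC b)) ?_
      exact (((dA b p.2).mul_const (p.1 ^ 2)).add ((dB b p.2).mul_const p.1)).add (dC b p.2)
  have h1 : ∀ a, pd1^[a] (fun p : ℝ × ℝ => quad 0 (A b p.2) (B b p.2) (C b p.2) p.1)
      = fun p : ℝ × ℝ => quad a (A b p.2) (B b p.2) (C b p.2) p.1 := by
    intro a
    induction a with
    | zero => rfl
    | succ a ih =>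
      rw [Function.iterate_succ_apply', ih]
      funext p
      refine pd1_of_hasDerivAt (quad_contDiff a (hA b) (hB b) (hC b)) ?_
      match a with
      | 0 =>
        have h := ((((hasDerivAt_id p.1).pow 2).const_mul (A b p.2)).add
          ((hasDerivAt_id p.1).const_mul (B b p.2))).add_const (C b p.2)
        refine h.congr_deriv ?_
        simp [quad]; ring
      | 1 =>
        have h := ((hasDerivAt_id p.1).const_mul (2 * A b p.2)).add_const (B b p.2)
        refine h.congr_deriv ?_
        simp [quad]
      | 2 => exact hasDerivAt_const p.1 (2 * A b p.2)
      | _ + 3 => exact hasDerivAt_const _ _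
  simp only [pd]
  rw [h2, h1]

/-! ### The blocks in Cartesian coordinates -/

/-- The denominator of the block of parameter `t`: up to the factor `t⁶`, it is
`1 + ((x - t) / t²)² + (y / t³)²`. -/
def blk (t : ℝ) (p : ℝ × ℝ) : ℝ := t ^ 6 + t ^ 2 * (p.1 - t) ^ 2 + p.2 ^ 2

lemma blk_contDiff (t : ℝ) : ContDiff ℝ (⊤ : ℕ∞) (blk t) := by unfold blk; fun_prop

lemma blowup_contDiff : ContDiff ℝ (⊤ : ℕ∞) blowup := by
  unfold blowup
  have h1 : ContDiff ℝ (⊤ : ℕ∞) (fun p : ℝ × ℝ => Real.cos p.2) :=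
    Real.contDiff_cos.comp contDiff_snd
  have h2 : ContDiff ℝ (⊤ : ℕ∞) (fun p : ℝ × ℝ => Real.sin p.2) :=
    Real.contDiff_sin.comp contDiff_snd
  exact (contDiff_fst.mul h1).prodMk (contDiff_fst.mul h2)

lemma le_blk {t : ℝ} (p : ℝ × ℝ) : t ^ 6 ≤ blk t p := by
  unfold blk
  nlinarith [sq_nonneg (t * (p.1 - t)), sq_nonneg p.2]

lemma blk_pos {t : ℝ} (ht : 0 < t) (p : ℝ × ℝ) : 0 < blk t p :=
  lt_of_lt_of_le (by positivity) (le_blk p)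

/-- The `b`-th derivative of `y ↦ e + y²`. -/
def sqSeq (e : ℝ) (b : ℕ) (y : ℝ) : ℝ :=
  match b with
  | 0 => e + y ^ 2
  | 1 => 2 * y
  | 2 => 2
  | _ => 0

lemma sqSeq_contDiff (e : ℝ) (b : ℕ) : ContDiff ℝ (⊤ : ℕ∞) (sqSeq e b) := by
  match b with
  | 0 => unfold sqSeq; fun_prop
  | 1 => unfold sqSeq; fun_prop
  | 2 => unfold sqSeq; fun_prop
  | _ + 3 => unfold sqSeq; fun_prop

lemma sqSeq_hasDerivAt (e : ℝ) (b : ℕ) (y : ℝ) :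
    HasDerivAt (sqSeq e b) (sqSeq e (b + 1) y) y := by
  match b with
  | 0 =>
    refine (((hasDerivAt_id y).pow 2).const_add e).congr_deriv ?_
    simp [sqSeq]
  | 1 =>
    refine ((hasDerivAt_id y).const_mul 2).congr_deriv ?_
    simp [sqSeq]
  | 2 => exact hasDerivAt_const _ _
  | _ + 3 => exact hasDerivAt_const _ _

lemma pd_blk (t : ℝ) (a b : ℕ) (p : ℝ × ℝ) :
    pd (a, b) (blk t) p = quad a (if b = 0 then t ^ 2 else 0) (if b = 0 then -(2 * t ^ 3) else 0)
      (sqSeq (t ^ 6 + t ^ 4) b p.2) p.1 := by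
  have h := pd_quad (A := fun b _ => if b = 0 then t ^ 2 else 0)
    (B := fun b _ => if b = 0 then -(2 * t ^ 3) else 0) (C := sqSeq (t ^ 6 + t ^ 4))
    (fun b => contDiff_const) (fun b => contDiff_const) (sqSeq_contDiff _)
    (fun b y => by simpa using hasDerivAt_const y (if b = 0 then t ^ 2 else 0))
    (fun b y => by simpa using hasDerivAt_const y (if b = 0 then -(2 * t ^ 3) else 0))
    (sqSeq_hasDerivAt _) a b
  have he : blk t = fun p : ℝ × ℝ => quad 0 (if (0 : ℕ) = 0 then t ^ 2 else 0)
      (if (0 : ℕ) = 0 then -(2 * t ^ 3) else 0) (sqSeq (t ^ 6 + t ^ 4) 0 p.2) p.1 := by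
    funext q
    simp [blk, quad, sqSeq]; ring
  rw [he, h]

lemma scale_bound {X Q τ C : ℝ} (hτ : 0 < τ) (n : ℕ) (h : |X| * τ ^ n ≤ C ^ n * Q) :
    |X| ≤ Q * (C / τ) ^ n := by
  rw [div_pow, mul_div_assoc', le_div_iff₀ (by positivity)]
  linarith

/-- Elementary inequalities for `Q = t⁶ + t² (x - t)² + y²`. -/
lemma blk_ineqs {t x y : ℝ} (ht : 0 < t) (ht1 : t ≤ 1) {Q : ℝ}
    (hQ : Q = t ^ 6 + t ^ 2 * (x - t) ^ 2 + y ^ 2) :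
    t ^ 6 ≤ Q ∧ y ^ 2 ≤ Q ∧ t ^ 2 * (x - t) ^ 2 ≤ Q ∧ 2 * t ^ 4 * |x - t| ≤ Q ∧
      2 * t ^ 3 * |y| ≤ Q ∧ 2 * t * (|x - t| * |y|) ≤ Q ∧ t ^ 4 * (x ^ 2 + y ^ 2) ≤ 2 * Q := by
  have h6 : 0 < t ^ 6 := by positivity
  have e1 : |x - t| ^ 2 = (x - t) ^ 2 := sq_abs _
  have e2 : |y| ^ 2 = y ^ 2 := sq_abs _
  have p1 : 0 ≤ t ^ 2 * (x - t) ^ 2 := by positivity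
  have p2 : 0 ≤ y ^ 2 := by positivity
  refine ⟨by linarith, by linarith, by linarith, ?_, ?_, ?_, ?_⟩
  · nlinarith [sq_nonneg (t ^ 3 - t * |x - t|)]
  · nlinarith [sq_nonneg (t ^ 3 - |y|)]
  · nlinarith [sq_nonneg (t * |x - t| - |y|)]
  · have hx : x ^ 2 ≤ 2 * (x - t) ^ 2 + 2 * t ^ 2 := by nlinarith [sq_nonneg (x - 2 * t)]
    have h2 : t ^ 2 ≤ 1 := pow_le_one₀ ht.le ht1
    have h4 : t ^ 4 ≤ 1 := pow_le_one₀ ht.le ht1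
    have q1 : t ^ 4 * x ^ 2 ≤ t ^ 4 * (2 * (x - t) ^ 2 + 2 * t ^ 2) :=
      mul_le_mul_of_nonneg_left hx (by positivity)
    have q2 : t ^ 2 * (t ^ 2 * (x - t) ^ 2) ≤ 1 * (t ^ 2 * (x - t) ^ 2) :=
      mul_le_mul_of_nonneg_right h2 p1
    have q3 : t ^ 4 * y ^ 2 ≤ 1 * y ^ 2 := mul_le_mul_of_nonneg_right h4 p2
    nlinarith

/-- In Cartesian coordinates the block of parameter `t` has frequencies of order `t⁻³`: the
polynomial `blk t` is quadratic, so finitely many derivatives are to be bounded. -/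
lemma blk_bound {t : ℝ} (ht : 0 < t) (ht1 : t ≤ 1) (p : ℝ × ℝ) (a b : ℕ) :
    |pd (a, b) (blk t) p| ≤ blk t p * (2 / t ^ 3) ^ (a + b) := by
  refine scale_bound (by positivity) _ ?_
  rw [pd_blk]
  obtain ⟨x, y⟩ := p
  obtain ⟨i1, i2, i3, i4, i5, i6, i7⟩ := blk_ineqs (x := x) (y := y) ht ht1 rfl
  have hQ : blk t (x, y) = t ^ 6 + t ^ 2 * (x - t) ^ 2 + y ^ 2 := rfl
  rw [← hQ] at i1 i2 i3 i4 i5 i6 i7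
  have hpos := blk_pos ht (x, y)
  have h3 : t ^ 3 ≤ 1 := pow_le_one₀ ht.le ht1
  match a, b with
  | 0, 0 =>
    have : quad 0 (t ^ 2) (-(2 * t ^ 3)) (sqSeq (t ^ 6 + t ^ 4) 0 y) x = blk t (x, y) := by
      rw [hQ]; simp [quad, sqSeq]; ring
    simp [this, abs_of_pos hpos]
  | 1, 0 =>
    have e : quad 1 (t ^ 2) (-(2 * t ^ 3)) (sqSeq (t ^ 6 + t ^ 4) 0 y) x
      = 2 * t ^ 2 * (x - t) := by simp [quad]; ring
    simp only [if_true, e, abs_mul, abs_two, abs_of_pos (pow_pos ht 2), add_zero, pow_one]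
    have : t ^ 5 * |x - t| ≤ t ^ 4 * |x - t| :=
      mul_le_mul_of_nonneg_right (pow_le_pow_of_le_one ht.le ht1 (by norm_num)) (abs_nonneg _)
    nlinarith
  | 2, 0 =>
    simp only [quad, if_true, add_zero]
    rw [abs_of_pos (by positivity)]
    have : t ^ 8 ≤ t ^ 6 := pow_le_pow_of_le_one ht.le ht1 (by norm_num)
    nlinarith
  | a + 3, 0 => simp only [quad, abs_zero, zero_mul]; positivity
  | 0, 1 =>
    simp [quad, sqSeq, abs_mul]
    nlinarith
  | 0, 2 =>
    simp [quad, sqSeq]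
    nlinarith
  | 0, b + 3 => simp [quad, sqSeq]; positivity
  | 1, b + 1 => simp [quad]; positivity
  | 2, b + 1 => simp [quad]; positivity
  | a + 3, b + 1 => simp [quad]; positivity

/-! ### The blocks in polar coordinates -/

/-- The `b`-th derivative in `θ` of the coefficient `t² cos² θ + sin² θ` of `r²` in `blk t ∘ blowup`. -/
def coefA (t : ℝ) (b : ℕ) (y : ℝ) : ℝ :=
  (if b = 0 then (1 + t ^ 2) / 2 else 0)
    - (1 - t ^ 2) / 2 * (2 ^ b * Real.cos (2 * y + b * (π / 2)))

/-- The `b`-th derivative in `θ` of the coefficient `-2 t³ cos θ` of `r` in `blk t ∘ blowup`. -/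
def coefB (t : ℝ) (b : ℕ) (y : ℝ) : ℝ := -(2 * t ^ 3 * Real.cos (y + b * (π / 2)))

lemma coefA_contDiff (t : ℝ) (b : ℕ) : ContDiff ℝ (⊤ : ℕ∞) (coefA t b) := by
  unfold coefA; fun_prop

lemma coefB_contDiff (t : ℝ) (b : ℕ) : ContDiff ℝ (⊤ : ℕ∞) (coefB t b) := by
  unfold coefB; fun_prop

lemma cos_shift (u : ℝ) (b : ℕ) :
    Real.cos (u + (b + 1 : ℕ) * (π / 2)) = -Real.sin (u + b * (π / 2)) := by
  rw [← Real.cos_add_pi_div_two]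
  congr 1
  push_cast
  ring

lemma coefA_hasDerivAt (t : ℝ) (b : ℕ) (y : ℝ) :
    HasDerivAt (coefA t b) (coefA t (b + 1) y) y := by
  have h1 : HasDerivAt (fun y : ℝ => 2 * y + b * (π / 2)) 2 y := by
    simpa using ((hasDerivAt_id y).const_mul 2).add_const (b * (π / 2))
  have h := ((h1.cos.const_mul (2 ^ b)).const_mul ((1 - t ^ 2) / 2)).const_sub
    (if b = 0 then (1 + t ^ 2) / 2 else 0)
  refine h.congr_deriv ?_
  simp only [coefA, cos_shift, Nat.succ_ne_zero, if_false, pow_succ]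
  ring

lemma coefB_hasDerivAt (t : ℝ) (b : ℕ) (y : ℝ) :
    HasDerivAt (coefB t b) (coefB t (b + 1) y) y := by
  have h1 : HasDerivAt (fun y : ℝ => y + b * (π / 2)) 1 y := by
    simpa using (hasDerivAt_id y).add_const (b * (π / 2))
  have h := (h1.cos.const_mul (2 * t ^ 3)).neg
  refine h.congr_deriv ?_
  simp only [coefB, cos_shift]
  ring

lemma coefA_zero (t y : ℝ) :
    coefA t 0 y = t ^ 2 * Real.cos y ^ 2 + Real.sin y ^ 2 := by
  simp only [coefA, if_true, Nat.cast_zero, zero_mul, add_zero, pow_zero, one_mul,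
    Real.cos_two_mul]
  have := Real.sin_sq_add_cos_sq y
  linear_combination (-1 : ℝ) * this

lemma coefB_zero (t y : ℝ) : coefB t 0 y = -(2 * t ^ 3 * Real.cos y) := by
  simp [coefB]

lemma coefA_one (t y : ℝ) :
    coefA t 1 y = 2 * (1 - t ^ 2) * (Real.sin y * Real.cos y) := by
  have h := cos_shift (2 * y) 0
  simp only [zero_add, Nat.cast_zero, zero_mul, add_zero, Real.sin_two_mul] at h
  simp only [coefA, h, one_ne_zero, if_false]
  ring

lemma coefB_one (t y : ℝ) : coefB t 1 y = 2 * t ^ 3 * Real.sin y := by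
  have h := cos_shift y 0
  simp only [zero_add, Nat.cast_zero, zero_mul, add_zero] at h
  simp only [coefB, h]
  ring

lemma abs_coefA_le {t : ℝ} (ht : 0 < t) (ht1 : t ≤ 1) (b : ℕ) (y : ℝ) :
    |coefA t (b + 2) y| ≤ 2 ^ (b + 2) / 2 := by
  have h1 : |Real.cos (2 * y + (b + 2 : ℕ) * (π / 2))| ≤ 1 := Real.abs_cos_le_one _
  have h2 : t ^ 2 ≤ 1 := pow_le_one₀ ht.le ht1
  have h3 : 0 ≤ (1 - t ^ 2) / 2 := by linarith
  simp only [coefA, Nat.succ_ne_zero, if_false, zero_sub, abs_neg]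
  rw [abs_mul, abs_mul, abs_of_nonneg h3, abs_of_pos (by positivity : (0 : ℝ) < 2 ^ (b + 2))]
  have h4 : (2 : ℝ) ^ (b + 2) * |Real.cos (2 * y + (b + 2 : ℕ) * (π / 2))| ≤ 2 ^ (b + 2) :=
    mul_le_of_le_one_right (by positivity) h1
  have h5 : (0 : ℝ) < 2 ^ (b + 2) := by positivity
  calc _ ≤ (1 - t ^ 2) / 2 * 2 ^ (b + 2) := mul_le_mul_of_nonneg_left h4 h3
    _ ≤ _ := by nlinarith [sq_nonneg t]

lemma abs_coefB_le {t : ℝ} (ht : 0 < t) (b : ℕ) (y : ℝ) : |coefB t b y| ≤ 2 * t ^ 3 := by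
  simp only [coefB, abs_neg]
  rw [abs_mul, abs_of_pos (by positivity : 0 < 2 * t ^ 3)]
  exact mul_le_of_le_one_right (by positivity) (Real.abs_cos_le_one _)

lemma pd_blk_blowup (t : ℝ) (a b : ℕ) (p : ℝ × ℝ) :
    pd (a, b) (fun q => blk t (blowup q)) p = quad a (coefA t b p.2) (coefB t b p.2)
      (if b = 0 then t ^ 6 + t ^ 4 else 0) p.1 := by
  have h := pd_quad (C := fun b _ => if b = 0 then t ^ 6 + t ^ 4 else 0)
    (coefA_contDiff t) (coefB_contDiff t) (fun b => contDiff_const)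
    (coefA_hasDerivAt t) (coefB_hasDerivAt t)
    (fun b y => by simpa using hasDerivAt_const y (if b = 0 then t ^ 6 + t ^ 4 else 0)) a b
  have he : (fun q => blk t (blowup q)) = fun p : ℝ × ℝ => quad 0 (coefA t 0 p.2)
      (coefB t 0 p.2) (if (0 : ℕ) = 0 then t ^ 6 + t ^ 4 else 0) p.1 := by
    funext q
    simp only [blk, blowup, quad, coefA_zero, coefB_zero, if_true]
    ring
  rw [he, h]

set_option maxHeartbeats 2000000 in
/-- In polar coordinates the block of parameter `t` only has frequencies of order `t⁻²`,
against `t⁻³` in Cartesian coordinates. -/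
lemma blk_blowup_bound {t : ℝ} (ht : 0 < t) (ht1 : t ≤ 1) (p : ℝ × ℝ) (a b : ℕ) :
    |pd (a, b) (fun q => blk t (blowup q)) p| ≤ blk t (blowup p) * (16 / t ^ 2) ^ (a + b) := by
  refine scale_bound (by positivity) _ ?_
  rw [pd_blk_blowup]
  obtain ⟨r, θ⟩ := p
  have hpos := blk_pos ht (blowup (r, θ))
  obtain ⟨i1, i2, i3, i4, i5, i6, i7⟩ :=
    blk_ineqs (x := r * Real.cos θ) (y := r * Real.sin θ) ht ht1 rfl
  have hQ : blk t (blowup (r, θ)) = t ^ 6 + t ^ 2 * (r * Real.cos θ - t) ^ 2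
    + (r * Real.sin θ) ^ 2 := rfl
  rw [← hQ] at i1 i2 i3 i4 i5 i6 i7
  have hcs := Real.sin_sq_add_cos_sq θ
  have hc1 := Real.abs_cos_le_one θ
  have hs1 := Real.abs_sin_le_one θ
  have hA0 := coefA_zero t θ
  have hB0 := coefB_zero t θ
  have hA1 := coefA_one t θ
  have hB1 := coefB_one t θ
  have hA := abs_coefA_le ht ht1 (y := θ)
  have hB := abs_coefB_le ht (y := θ)
  set Q := blk t (blowup (r, θ)) with hQdef
  set c := Real.cos θ
  set s := Real.sin θ
  have t1 : ∀ n : ℕ, t ^ n ≤ 1 := fun n => pow_le_one₀ ht.le ht1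
  have t2 : t ^ 2 ≤ 1 := t1 2
  have i7' : t ^ 4 * r ^ 2 ≤ 2 * Q := by
    have : (r * c) ^ 2 + (r * s) ^ 2 = r ^ 2 := by linear_combination r ^ 2 * hcs
    rwa [this] at i7
  have hc2 : c ^ 2 ≤ 1 := by nlinarith [sq_nonneg s]
  have hs2 : s ^ 2 ≤ 1 := by nlinarith [sq_nonneg c]
  -- `|s|` is at most of order `√Q / t²`: if `t / 2 ≤ |r|` this comes from the term `y²` of `Q`,
  -- otherwise from the term `t² (x - t)²`
  have i8 : t ^ 4 * s ^ 2 ≤ 4 * Q := by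
    by_cases hr : t / 2 ≤ |r|
    · have h1 : t ^ 2 ≤ 4 * r ^ 2 := by
        have := mul_self_le_mul_self (by positivity) hr
        have e : |r| * |r| = r ^ 2 := by rw [← sq, sq_abs]
        nlinarith
      have h2 : t ^ 2 * s ^ 2 ≤ 4 * (r * s) ^ 2 := by
        nlinarith [mul_le_mul_of_nonneg_right h1 (sq_nonneg s)]
      have h3 : t ^ 2 * (t ^ 2 * s ^ 2) ≤ 1 * (t ^ 2 * s ^ 2) :=
        mul_le_mul_of_nonneg_right t2 (by positivity)
      nlinarith
    · push Not at hr
      have h1 : |r * c| ≤ t / 2 := by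
        rw [abs_mul]; exact (mul_le_of_le_one_right (abs_nonneg _) hc1).trans hr.le
      have h2 : t / 2 ≤ t - r * c := by linarith [(abs_le.mp h1).2]
      have h3 : t ^ 2 / 4 ≤ (r * c - t) ^ 2 := by nlinarith
      have h4 : t ^ 4 * s ^ 2 ≤ t ^ 4 := mul_le_of_le_one_right (by positivity) hs2
      nlinarith [mul_le_mul_of_nonneg_left h3 (sq_nonneg t)]
  have i9 : 2 * t ^ 2 * |r| * s ^ 2 ≤ 5 * Q := by
    have e : |r| ^ 2 = r ^ 2 := sq_abs r
    have e2 : |r| ^ 2 * s ^ 2 = (r * s) ^ 2 := by rw [e]; ring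
    linarith [mul_nonneg (sq_nonneg (t ^ 2 - |r|)) (sq_nonneg s)]
  have i10 : 2 * t ^ 6 * |r| ≤ 3 * Q := by
    have e : |r| ^ 2 = r ^ 2 := sq_abs r
    have h1 : t ^ 2 * (t ^ 4 * r ^ 2) ≤ 1 * (t ^ 4 * r ^ 2) :=
      mul_le_mul_of_nonneg_right t2 (by positivity)
    have e2 : t ^ 6 * |r| ^ 2 = t ^ 2 * (t ^ 4 * r ^ 2) := by rw [e]; ring
    linarith [mul_nonneg (pow_pos ht 6).le (sq_nonneg (1 - |r|))]
  have i11 : ∀ n, 6 ≤ n → t ^ n ≤ Q := fun n hn =>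
    (pow_le_pow_of_le_one ht.le ht1 hn).trans i1
  match a, b with
  | 0, 0 =>
    have e : quad 0 (coefA t 0 θ) (coefB t 0 θ) (t ^ 6 + t ^ 4) r = Q := by
      rw [hQ, hA0, hB0]; simp only [quad]; ring
    simp [e, abs_of_pos hpos]
  | 1, 0 =>
    have e : quad 1 (coefA t 0 θ) (coefB t 0 θ) (t ^ 6 + t ^ 4) r
        = 2 * t ^ 2 * (r * c - t) * c + 2 * r * s ^ 2 := by
      rw [hA0, hB0]; simp only [quad]; ring
    simp only [if_true, e, add_zero, pow_one]
    have h1 : |2 * t ^ 2 * (r * c - t) * c| ≤ 2 * t ^ 2 * |r * c - t| := by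
      rw [abs_mul, abs_mul, abs_of_pos (by positivity : 0 < 2 * t ^ 2)]
      exact mul_le_of_le_one_right (by positivity) hc1
    have h2 : |2 * r * s ^ 2| = 2 * |r| * s ^ 2 := by
      rw [abs_mul, abs_mul, abs_two, abs_of_nonneg (sq_nonneg s)]
    have h3 := abs_add_le (2 * t ^ 2 * (r * c - t) * c) (2 * r * s ^ 2)
    rw [h2] at h3
    have h4 := mul_le_mul_of_nonneg_right (h3.trans (add_le_add_left h1 _)) (sq_nonneg t)
    refine h4.trans ?_
    linarith
  | 2, 0 =>
    simp only [quad, hA0, add_zero]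
    rw [abs_of_nonneg (by positivity)]
    have h1 : t ^ 6 * c ^ 2 ≤ t ^ 6 := mul_le_of_le_one_right (by positivity) hc2
    linarith
  | 0, 1 =>
    have e : quad 0 (coefA t 1 θ) (coefB t 1 θ) 0 r
        = 2 * (1 - t ^ 2) * ((r * c - t) * (r * s)) + 2 * t * (r * s) := by
      rw [hA1, hB1]; simp only [quad]; ring
    simp only [one_ne_zero, if_false, e, zero_add, pow_one]
    have h1 : |2 * (1 - t ^ 2) * ((r * c - t) * (r * s))|
        ≤ 2 * (|r * c - t| * |r * s|) := by
      rw [abs_mul, abs_mul (r * c - t), abs_of_nonneg (by linarith : 0 ≤ 2 * (1 - t ^ 2))]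
      exact mul_le_mul_of_nonneg_right (by nlinarith) (by positivity)
    have h2 : |2 * t * (r * s)| = 2 * t * |r * s| := by
      rw [abs_mul, abs_of_pos (by positivity)]
    have h3 := abs_add_le (2 * (1 - t ^ 2) * ((r * c - t) * (r * s))) (2 * t * (r * s))
    rw [h2] at h3
    have h4 := mul_le_mul_of_nonneg_right (h3.trans (add_le_add_left h1 _)) (sq_nonneg t)
    refine h4.trans ?_
    have h5 : t * (2 * t * (|r * c - t| * |r * s|)) ≤ 1 * (2 * t * (|r * c - t| * |r * s|)) :=
      mul_le_mul_of_nonneg_right ht1 (by positivity)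
    linarith
  | 1, 1 =>
    have e : quad 1 (coefA t 1 θ) (coefB t 1 θ) 0 r
        = 4 * (1 - t ^ 2) * (c * (r * s)) + 2 * t ^ 3 * s := by
      rw [hA1, hB1]; simp only [quad]; ring
    simp only [one_ne_zero, if_false, e, Nat.reduceAdd]
    have h1 : |4 * (1 - t ^ 2) * (c * (r * s))| ≤ 4 * |r * s| := by
      rw [abs_mul, abs_mul c, abs_of_nonneg (by linarith : 0 ≤ 4 * (1 - t ^ 2))]
      have : |c| * |r * s| ≤ |r * s| := mul_le_of_le_one_left (abs_nonneg _) hc1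
      exact mul_le_mul (by nlinarith) this (by positivity) (by norm_num)
    have h2 : |2 * t ^ 3 * s| ≤ 2 * t ^ 3 := by
      rw [abs_mul, abs_of_pos (by positivity : 0 < 2 * t ^ 3)]
      exact mul_le_of_le_one_right (by positivity) hs1
    have h3 := (abs_add_le (4 * (1 - t ^ 2) * (c * (r * s))) (2 * t ^ 3 * s)).trans
      (add_le_add h1 h2)
    have h4 := mul_le_mul_of_nonneg_right h3 (by positivity : 0 ≤ (t ^ 2) ^ 2)
    refine h4.trans ?_
    have h5 : t * (2 * t ^ 3 * |r * s|) ≤ 1 * (2 * t ^ 3 * |r * s|) :=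
      mul_le_mul_of_nonneg_right ht1 (by positivity)
    linarith [i11 7 (by norm_num)]
  | 2, 1 =>
    simp only [quad, hA1, Nat.reduceAdd]
    have h1 : |2 * (2 * (1 - t ^ 2) * (s * c))| ≤ 4 := by
      have hsc : |s * c| ≤ 1 := by
        rw [abs_mul]; exact mul_le_one₀ hs1 (abs_nonneg _) hc1
      rw [abs_mul, abs_mul, abs_two, abs_of_nonneg (by linarith : 0 ≤ 2 * (1 - t ^ 2))]
      nlinarith [abs_nonneg (s * c), sq_nonneg t]
    have h4 := mul_le_mul_of_nonneg_right h1 (by positivity : 0 ≤ (t ^ 2) ^ 3)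
    refine h4.trans ?_
    linarith
  | 0, b + 2 =>
    have h1 : |quad 0 (coefA t (b + 2) θ) (coefB t (b + 2) θ) 0 r|
        ≤ 2 ^ (b + 2) / 2 * r ^ 2 + 2 * t ^ 3 * |r| := by
      simp only [quad, add_zero]
      refine (abs_add_le _ _).trans ?_
      rw [abs_mul, abs_mul, abs_of_nonneg (sq_nonneg r)]
      exact add_le_add (mul_le_mul_of_nonneg_right (hA b) (sq_nonneg r))
        (mul_le_mul_of_nonneg_right (hB (b + 2)) (abs_nonneg r))
    have h2 : (t ^ 2) ^ (b + 2) ≤ t ^ 4 := by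
      rw [← pow_mul]; exact pow_le_pow_of_le_one ht.le ht1 (by omega)
    have h3 := mul_le_mul h1 h2 (by positivity) (by positivity)
    simp only [Nat.succ_ne_zero, if_false, zero_add]
    refine h3.trans ?_
    have h4 : (1 : ℝ) ≤ 2 ^ b := one_le_pow₀ (by norm_num)
    have h5 : t ^ 7 * |r| ≤ t ^ 6 * |r| :=
      mul_le_mul_of_nonneg_right (pow_le_pow_of_le_one ht.le ht1 (by norm_num)) (abs_nonneg _)
    have h6 : (2 : ℝ) ^ b ≤ 16 ^ b := pow_le_pow_left₀ (by norm_num) (by norm_num) b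
    have h7 : (2 ^ (b + 2) / 2 * r ^ 2 + 2 * t ^ 3 * |r|) * t ^ 4 ≤ 2 ^ b * (7 * Q) := by
      have h8 : 2 ^ b * (t ^ 4 * r ^ 2) ≤ 2 ^ b * (2 * Q) :=
        mul_le_mul_of_nonneg_left i7' (by positivity)
      have h9 : 1 * (3 * Q) ≤ 2 ^ b * (3 * Q) := mul_le_mul_of_nonneg_right h4 (by positivity)
      rw [pow_add]
      linarith
    refine h7.trans ?_
    rw [pow_add]
    linarith [mul_le_mul_of_nonneg_right h6 hpos.le, mul_pos (pow_pos two_pos b) hpos]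
  | 1, b + 2 =>
    have h1 : |quad 1 (coefA t (b + 2) θ) (coefB t (b + 2) θ) 0 r|
        ≤ 2 ^ (b + 2) * |r| + 2 * t ^ 3 := by
      simp only [quad]
      refine (abs_add_le _ _).trans ?_
      rw [abs_mul, abs_mul, abs_two]
      have := mul_le_mul_of_nonneg_right (hA b) (abs_nonneg r)
      linarith [hB (b + 2)]
    have h2 : (t ^ 2) ^ (1 + (b + 2)) ≤ t ^ 6 := by
      rw [← pow_mul]; exact pow_le_pow_of_le_one ht.le ht1 (by omega)
    have h3 := mul_le_mul h1 h2 (by positivity) (by positivity)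
    simp only [Nat.succ_ne_zero, if_false]
    refine h3.trans ?_
    have h4 : (1 : ℝ) ≤ 2 ^ b := one_le_pow₀ (by norm_num)
    have h6 : (2 : ℝ) ^ b ≤ 16 ^ b := pow_le_pow_left₀ (by norm_num) (by norm_num) b
    have h7 : (2 ^ (b + 2) * |r| + 2 * t ^ 3) * t ^ 6 ≤ 2 ^ b * (8 * Q) := by
      have h8 : 2 ^ b * (2 * t ^ 6 * |r|) ≤ 2 ^ b * (3 * Q) :=
        mul_le_mul_of_nonneg_left i10 (by positivity)
      have h9 : 1 * (2 * Q) ≤ 2 ^ b * (2 * Q) := mul_le_mul_of_nonneg_right h4 (by positivity)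
      rw [pow_add]
      linarith [i11 9 (by norm_num)]
    refine h7.trans ?_
    rw [pow_add, pow_add]
    linarith [mul_le_mul_of_nonneg_right h6 hpos.le, mul_pos (pow_pos two_pos b) hpos]
  | 2, b + 2 =>
    have h1 : |quad 2 (coefA t (b + 2) θ) (coefB t (b + 2) θ) 0 r| ≤ 2 ^ (b + 2) := by
      simp only [quad]
      rw [abs_mul, abs_two]
      linarith [hA b]
    have h2 : (t ^ 2) ^ (2 + (b + 2)) ≤ Q := by
      rw [← pow_mul]; exact i11 _ (by omega)
    have h3 := mul_le_mul h1 h2 (by positivity) (by positivity)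
    simp only [Nat.succ_ne_zero, if_false]
    refine h3.trans (mul_le_mul_of_nonneg_right ?_ hpos.le)
    have h6 : (2 : ℝ) ^ (b + 2) ≤ 16 ^ (b + 2) :=
      pow_le_pow_left₀ (by norm_num) (by norm_num) _
    exact h6.trans (pow_le_pow_right₀ (by norm_num) (by omega))
  | a + 3, b =>
    simp only [quad, abs_zero, zero_mul]
    positivity

/-! ### Derivatives of the reciprocal blocks along the axis -/

/-- On the axis `y = 0` the even Taylor coefficients in `y` of the reciprocal of a block
alternate in sign, whatever the parameter `t`. -/
lemma tc_blk_inv {t : ℝ} (ht : 0 < t) (x : ℝ) (k : ℕ) :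
    tc 0 (2 * k) (fun q => (blk t q)⁻¹) (x, 0) = (-1) ^ k * (blk t (x, 0))⁻¹ ^ (k + 1) := by
  have hu : ContDiff ℝ (⊤ : ℕ∞) (fun q => (blk t q)⁻¹) :=
    (blk_contDiff t).inv fun q => (blk_pos ht q).ne'
  have hone : blk t * (fun q => (blk t q)⁻¹) = fun _ => (1 : ℝ) := by
    funext q
    exact mul_inv_cancel₀ (blk_pos ht q).ne'
  have hp := blk_pos ht (x, 0)
  induction k with
  | zero => simp [tc, pd]
  | succ k ih =>
    have hL := tc_mul (blk_contDiff t) hu 0 (2 * k + 2) (x, 0)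
    rw [hone, tc_one (by omega)] at hL
    rw [Finset.sum_range_succ', Finset.sum_range_succ', Finset.sum_range_succ'] at hL
    have h0 : tc 0 0 (blk t) (x, 0) = blk t (x, 0) := by simp [tc, pd]
    have h1 : tc 0 1 (blk t) (x, 0) = 0 := by simp [tc, pd_blk, quad, sqSeq]
    have h2 : tc 0 2 (blk t) (x, 0) = 1 := by simp [tc, pd_blk, quad, sqSeq]
    have h3 : ∀ j, tc 0 (j + 1 + 1 + 1) (blk t) (x, 0) = 0 := fun j => by
      simp [tc, pd_blk, quad, sqSeq]
    simp only [zero_add, Finset.range_one, Finset.sum_singleton, h0, h1, h2, h3, zero_mul,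
      Finset.sum_const_zero, Nat.sub_zero, one_mul, add_zero, Nat.reduceAdd,
      Nat.add_sub_cancel, ih] at hL
    have e : 2 * (k + 1) = 2 * k + 2 := by ring
    rw [e]
    have h4 : tc 0 (2 * k + 2) (fun q => (blk t q)⁻¹) (x, 0)
        = -((-1) ^ k * (blk t (x, 0))⁻¹ ^ (k + 1)) * (blk t (x, 0))⁻¹ := by
      rw [eq_mul_inv_iff_mul_eq₀ hp.ne']
      linarith
    rw [h4]
    ring

/-! ### The weight sequence -/

section weight

variable {M : ℕ → ℝ}

lemma ratio_pos (hMpos : ∀ k, 0 < M k) (l : ℕ) : 0 < M (l + 1) / M l :=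
  div_pos (hMpos _) (hMpos _)

/-- Log-convexity: the line of slope `log (M (l + 1) / M l)` through `(l, log M l)` lies below
the graph of `log M`. -/
lemma logConvex_line (hMpos : ∀ k, 0 < M k) (hMlc : LogConvexSeq M) (l n : ℕ) :
    M l * (M (l + 1) / M l) ^ n ≤ M n * (M (l + 1) / M l) ^ l := by
  have hm := ratio_pos hMpos l
  have step : ∀ k, M (k + 1) = M k * (M (k + 1) / M k) := fun k =>
    (mul_div_cancel₀ _ (hMpos k).ne').symm
  set m := M (l + 1) / M l with hmdef
  have up : ∀ j, M l * m ^ j ≤ M (l + j) := by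
    intro j
    induction j with
    | zero => simp
    | succ j ih =>
      have h1 : m ≤ M (l + j + 1) / M (l + j) := hMlc (Nat.le_add_right l j)
      rw [pow_succ, ← mul_assoc, ← add_assoc, step (l + j)]
      exact mul_le_mul ih h1 hm.le (hMpos _).le
  have down : ∀ j k, k + j = l → M l ≤ M k * m ^ j := by
    intro j
    induction j with
    | zero => rintro k rfl; simp
    | succ j ih =>
      intro k hk
      have h1 : M (k + 1) / M k ≤ m := hMlc (by omega : k ≤ l)
      refine (ih (k + 1) (by omega)).trans ?_
      rw [step k, pow_succ, mul_comm (m ^ j) m, ← mul_assoc]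
      exact mul_le_mul_of_nonneg_right (mul_le_mul_of_nonneg_left h1 (hMpos k).le) (by positivity)
  rcases le_total l n with h | h
  · obtain ⟨j, rfl⟩ := Nat.exists_eq_add_of_le h
    rw [pow_add, mul_comm (m ^ l), ← mul_assoc]
    exact mul_le_mul_of_nonneg_right (up j) (by positivity)
  · obtain ⟨j, rfl⟩ := Nat.exists_eq_add_of_le h
    rw [pow_add, mul_comm (m ^ n), ← mul_assoc]
    exact mul_le_mul_of_nonneg_right (down j n rfl) (by positivity)

/-- If the ratios of `M` were bounded, so would be the roots `M k ^ (1 / k)`. For `k = 0` the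
exponent is `0⁻¹ = 0`, whence the comparison with `max C 1`. -/
lemma ratio_unbounded (hMpos : ∀ k, 0 < M k) (hM0 : M 0 = 1)
    (hMan : ∀ C : ℝ, ∃ k : ℕ, C < M k ^ ((k : ℝ)⁻¹)) (C : ℝ) :
    ¬ ∀ l, M (l + 1) / M l ≤ C := by
  intro h
  have hC : 0 < C := (ratio_pos hMpos 0).trans_le (h 0)
  have hle : ∀ k, M k ≤ C ^ k := by
    intro k
    induction k with
    | zero => simp [hM0]
    | succ k ih =>
      have h1 := (div_le_iff₀ (hMpos k)).mp (h k)
      rw [pow_succ, mul_comm]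
      exact h1.trans (mul_le_mul_of_nonneg_left ih hC.le)
  obtain ⟨k, hk⟩ := hMan (max C 1)
  rcases Nat.eq_zero_or_pos k with rfl | hk0
  · simp at hk
  · have h1 : M k ^ ((k : ℝ)⁻¹) ≤ (C ^ k) ^ ((k : ℝ)⁻¹) :=
      Real.rpow_le_rpow (hMpos k).le (hle k) (by positivity)
    rw [Real.pow_rpow_inv_natCast hC.le hk0.ne'] at h1
    exact absurd (h1.trans (le_max_left C 1)) (not_le.mpr hk)

/-- The location `t_l = (M (l + 1) / M l) ^ (-1/2)` of the `l`-th block. -/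
def tSeq (M : ℕ → ℝ) (l : ℕ) : ℝ := (√(M (l + 1) / M l))⁻¹

/-- The amplitude `c_l = 2⁻ˡ M_l / m_l ^ l` of the `l`-th block, where `m_l = M (l + 1) / M l`. -/
def ampSeq (M : ℕ → ℝ) (l : ℕ) : ℝ := (1 / 2) ^ l * (M l / (M (l + 1) / M l) ^ l)

lemma tSeq_pos (hMpos : ∀ k, 0 < M k) (l : ℕ) : 0 < tSeq M l :=
  inv_pos.mpr (Real.sqrt_pos.mpr (ratio_pos hMpos l))

lemma tSeq_sq (hMpos : ∀ k, 0 < M k) (l : ℕ) : tSeq M l ^ 2 = (M (l + 1) / M l)⁻¹ := by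
  rw [tSeq, inv_pow, Real.sq_sqrt (ratio_pos hMpos l).le]

lemma tSeq_le_one (hMpos : ∀ k, 0 < M k) (hMmono : Monotone M) (l : ℕ) : tSeq M l ≤ 1 := by
  refine inv_le_one_of_one_le₀ (Real.one_le_sqrt.mpr ?_)
  rw [one_le_div (hMpos l)]
  exact hMmono (Nat.le_succ l)

lemma ampSeq_pos (hMpos : ∀ k, 0 < M k) (l : ℕ) : 0 < ampSeq M l := by
  have := ratio_pos hMpos l
  have := hMpos l
  unfold ampSeq
  positivity

/-- The amplitudes compensate powers of the ratios, by log-convexity; this is the inequality that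
places the series of blocks in a Denjoy-Carleman class. -/
lemma ampSeq_bound (hMpos : ∀ k, 0 < M k) (hMlc : LogConvexSeq M) (l n : ℕ) :
    ampSeq M l * (M (l + 1) / M l) ^ n ≤ (1 / 2) ^ l * M n := by
  have hm := ratio_pos hMpos l
  rw [ampSeq, mul_assoc]
  refine mul_le_mul_of_nonneg_left ?_ (by positivity)
  rw [div_mul_eq_mul_div, div_le_iff₀ (by positivity)]
  exact logConvex_line hMpos hMlc l n

end weight

/-! ### The counterexample -/

/-- Theorem 1.2, second part: if `C_M` is quasianalytic, closed under differentiation,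
and properly contains the analytic functions, then there exists
`F ∈ C_{M^{(2)}}(ℝ²) \ C_M(ℝ²)` with `F ∘ σ ∈ C_M(ℝ²)`. -/
theorem quasianalytic_estimate_blowup_self (M : ℕ → ℝ)
    (hMpos : ∀ k, 0 < M k) (hMmono : Monotone M) (hM0 : M 0 = 1)
    (hMlc : LogConvexSeq M)
    (hMder : ∃ B : ℝ, ∀ k : ℕ, (M (k + 1) / M k) ^ ((k : ℝ)⁻¹) ≤ B)
    (hMqa : ¬ Summable (fun k : ℕ => 1 / ((k + 1 : ℝ) * M k ^ ((k : ℝ)⁻¹))))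
    (hMan : ∀ C : ℝ, ∃ k : ℕ, C < M k ^ ((k : ℝ)⁻¹)) :
    ∃ F : ℝ × ℝ → ℝ, ContDiff ℝ (⊤ : ℕ∞) F ∧
      MemDC (fun k => M (2 * k)) F ∧ ¬ MemDC M F ∧ MemDC M (F ∘ blowup) := by
  have hm := ratio_pos hMpos
  have hT := tSeq_pos hMpos
  have hT1 := tSeq_le_one hMpos hMmono
  have hT2 := tSeq_sq hMpos
  have hc := ampSeq_pos hMpos
  have hbd := ampSeq_bound hMpos hMlc
  have hd : ∀ l, 0 ≤ ampSeq M l * tSeq M l ^ 6 := fun l =>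
    mul_nonneg (hc l).le (pow_nonneg (hT l).le 6)
  have hdc : ∀ l q, ampSeq M l * tSeq M l ^ 6 ≤ ampSeq M l * blk (tSeq M l) q := fun l q =>
    mul_le_mul_of_nonneg_left (le_blk q) (hc l).le
  obtain ⟨hgood, hF⟩ := series_memDC (D := fun l => blk (tSeq M l))
    (R := fun l => 2 / tSeq M l ^ 3) (d := fun l => ampSeq M l * tSeq M l ^ 6)
    (c := ampSeq M) (B := 8) (W := fun k => M (2 * k))
    (fun l => blk_contDiff _) (fun l => blk_pos (hT l))
    (fun l => div_pos two_pos (pow_pos (hT l) 3)) (fun l => blk_bound (hT l) (hT1 l)) hd hdc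
    (by norm_num) (fun l n => by
      have hTl := hT l
      -- `t⁻³ ≤ t⁻⁴`, the square of the ratio `M (l + 1) / M l`
      have h1 : 4 * (2 / tSeq M l ^ 3) ≤ 8 * (M (l + 1) / M l) ^ 2 := by
        have h2 : (M (l + 1) / M l) ^ 2 = (tSeq M l ^ 4)⁻¹ := by
          rw [show tSeq M l ^ 4 = (tSeq M l ^ 2) ^ 2 by ring, hT2, inv_pow, inv_inv]
        have h3 : (tSeq M l ^ 3)⁻¹ ≤ (tSeq M l ^ 4)⁻¹ :=
          inv_anti₀ (by positivity) (pow_le_pow_of_le_one hTl.le (hT1 l) (by norm_num))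
        rw [h2, div_eq_mul_inv]
        linarith
      calc ampSeq M l * (4 * (2 / tSeq M l ^ 3)) ^ n
          ≤ ampSeq M l * (8 * (M (l + 1) / M l) ^ 2) ^ n :=
            mul_le_mul_of_nonneg_left (pow_le_pow_left₀ (by positivity) h1 n) (hc l).le
        _ = 8 ^ n * (ampSeq M l * (M (l + 1) / M l) ^ (2 * n)) := by rw [mul_pow, pow_mul]; ring
        _ ≤ 8 ^ n * ((1 / 2) ^ l * M (2 * n)) :=
            mul_le_mul_of_nonneg_left (hbd l (2 * n)) (by positivity)
        _ = _ := by ring)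
  obtain ⟨-, hFσ⟩ := series_memDC (D := fun l q => blk (tSeq M l) (blowup q))
    (R := fun l => 16 / tSeq M l ^ 2) (d := fun l => ampSeq M l * tSeq M l ^ 6)
    (c := ampSeq M) (B := 64) (W := M)
    (fun l => (blk_contDiff _).comp blowup_contDiff) (fun l q => blk_pos (hT l) _)
    (fun l => div_pos (by norm_num) (pow_pos (hT l) 2))
    (fun l => blk_blowup_bound (hT l) (hT1 l)) hd (fun l q => hdc l _)
    (by norm_num) (fun l n => by
      have e : 4 * (16 / tSeq M l ^ 2) = 64 * (M (l + 1) / M l) := by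
        rw [hT2, div_inv_eq_mul]; ring
      calc ampSeq M l * (4 * (16 / tSeq M l ^ 2)) ^ n
          = 64 ^ n * (ampSeq M l * (M (l + 1) / M l) ^ n) := by rw [e, mul_pow]; ring
        _ ≤ 64 ^ n * ((1 / 2) ^ l * M n) :=
            mul_le_mul_of_nonneg_left (hbd l n) (by positivity)
        _ = _ := by ring)
  refine ⟨_, hF.1, hF, ?_, hFσ⟩
  rintro ⟨-, hmem⟩
  obtain ⟨A, hA, B, hB, hAB⟩ := hmem (Set.Icc 0 1 ×ˢ {0}) (isCompact_Icc.prod isCompact_singleton)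
  -- the derivative of order `2 k` at the centre of the block of index `2 k`
  have key : ∀ k : ℕ, (M (2 * k + 1) / M (2 * k)) ^ k ≤ A * (4 * B ^ 2) ^ k := by
    intro k
    set n := 2 * k with hn
    have h := hAB (tSeq M n, 0) ⟨⟨(hT n).le, hT1 n⟩, rfl⟩ (0, n)
    rw [hgood.pd_tsum] at h
    have hterm : ∀ l, pd (0, n) (fun q => ampSeq M l * tSeq M l ^ 6 * (blk (tSeq M l) q)⁻¹)
        (tSeq M n, 0) = (-1) ^ k * (ampSeq M l * tSeq M l ^ 6 * (Nat.factorial n *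
          (blk (tSeq M l) (tSeq M n, 0))⁻¹ ^ (k + 1))) := by
      intro l
      have hu : ContDiff ℝ (⊤ : ℕ∞) fun q => (blk (tSeq M l) q)⁻¹ :=
        (blk_contDiff _).inv fun q => (blk_pos (hT l) q).ne'
      rw [pd_const_mul hu]
      have h1 := tc_blk_inv (hT l) (tSeq M n) k
      rw [tc, Nat.factorial_zero, Nat.cast_one, one_mul, div_eq_iff (by positivity)] at h1
      rw [← hn] at h1
      rw [h1]
      ring
    obtain ⟨u, hu, hub⟩ := hgood.2 (0, n)
    have hsum : Summable fun l => ampSeq M l * tSeq M l ^ 6 * (Nat.factorial n *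
        (blk (tSeq M l) (tSeq M n, 0))⁻¹ ^ (k + 1)) := by
      refine Summable.of_norm_bounded hu fun l => ?_
      have := hub l (tSeq M n, 0)
      rw [hterm, abs_mul, abs_pow, abs_neg, abs_one, one_pow, one_mul] at this
      exact this
    simp only [hterm] at h
    rw [tsum_mul_left, abs_mul, abs_pow, abs_neg, abs_one, one_pow, one_mul] at h
    have hnn : ∀ l, 0 ≤ ampSeq M l * tSeq M l ^ 6 * (Nat.factorial n *
        (blk (tSeq M l) (tSeq M n, 0))⁻¹ ^ (k + 1)) := fun l => by
      have := blk_pos (hT l) (tSeq M n, 0)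
      have := hd l
      positivity
    -- all the terms of the series have the same sign, so a single one bounds it from below
    have h2 := (hsum.le_tsum n fun l _ => hnn l).trans ((le_abs_self _).trans h)
    have h3 : blk (tSeq M n) (tSeq M n, 0) = tSeq M n ^ 6 := by simp [blk]
    have hTn := hT n
    have hmn := hm n
    have hMn := hMpos n
    have h4 : (tSeq M n ^ 6)⁻¹ = (M (n + 1) / M n) ^ 3 := by
      rw [show tSeq M n ^ 6 = (tSeq M n ^ 2) ^ 3 by ring, hT2, inv_pow, inv_inv]
    have h5 : ampSeq M n * tSeq M n ^ 6 * (Nat.factorial n * (tSeq M n ^ 6)⁻¹ ^ (k + 1))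
        = Nat.factorial n * M n * ((1 / 4) ^ k * (M (n + 1) / M n) ^ k) := by
      have e1 : tSeq M n ^ 6 * (tSeq M n ^ 6)⁻¹ = 1 := mul_inv_cancel₀ (by positivity)
      have e2 : ((1 : ℝ) / 2) ^ n = (1 / 4) ^ k := by rw [hn, pow_mul]; norm_num
      have e3 : (M (n + 1) / M n) ^ n = (M (n + 1) / M n) ^ k * (M (n + 1) / M n) ^ k := by
        rw [hn, two_mul, pow_add]
      have e4 : (tSeq M n ^ 6)⁻¹ ^ k = (M (n + 1) / M n) ^ k * (M (n + 1) / M n) ^ k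
          * (M (n + 1) / M n) ^ k := by
        rw [h4, ← pow_mul, ← pow_add, ← pow_add]; congr 1; ring
      calc _ = ampSeq M n * Nat.factorial n * (tSeq M n ^ 6)⁻¹ ^ k
            * (tSeq M n ^ 6 * (tSeq M n ^ 6)⁻¹) := by rw [pow_succ]; ring
        _ = _ := by
          rw [e1, e4, ampSeq, e2, e3]
          generalize M (n + 1) / M n = m at hmn
          field_simp
    rw [h3, h5] at h2
    simp only [zero_add, Nat.factorial_zero, Nat.cast_one, one_mul] at h2
    have h6 : (1 / 4) ^ k * (M (n + 1) / M n) ^ k ≤ A * (B ^ 2) ^ k := by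
      have e : A * B ^ n * Nat.factorial n * M n
          = (Nat.factorial n * M n) * (A * (B ^ 2) ^ k) := by rw [hn, pow_mul]; ring
      rw [e] at h2
      exact le_of_mul_le_mul_left h2 (by positivity)
    have e5 : (4 : ℝ) ^ k * (1 / 4) ^ k = 1 := by rw [← mul_pow]; norm_num
    calc (M (n + 1) / M n) ^ k = 4 ^ k * ((1 / 4) ^ k * (M (n + 1) / M n) ^ k) := by
          rw [← mul_assoc, e5, one_mul]
      _ ≤ 4 ^ k * (A * (B ^ 2) ^ k) := mul_le_mul_of_nonneg_left h6 (by positivity)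
      _ = _ := by rw [mul_pow]; ring
  refine ratio_unbounded hMpos hM0 hMan (max A 1 * (4 * B ^ 2)) fun l => ?_
  have h1 : (M (2 * (l + 1) + 1) / M (2 * (l + 1))) ^ (l + 1)
      ≤ (max A 1 * (4 * B ^ 2)) ^ (l + 1) := by
    refine (key (l + 1)).trans ?_
    rw [mul_pow (max A 1)]
    refine mul_le_mul_of_nonneg_right ?_ (by positivity)
    exact (le_max_left A 1).trans (le_self_pow₀ (le_max_right A 1) (Nat.succ_ne_zero l))
  have h2 := le_of_pow_le_pow_left₀ (Nat.succ_ne_zero l) (by positivity) h1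
  exact (hMlc (by omega : l ≤ 2 * (l + 1))).trans h2
end
end

section
/- There exists a nondecreasing logarithmically convex sequence M = (M_k) of positive real numbers with M_0 = 1 such that: (a) sup_k (M_{k+1}/M_k)^{1/k} < ∞ (C_M is closed under differentiation); (b) Σ_{k≥1} 1/((k+1) (M_{2k})^{1/k}) = ∞ (C_{M^{(2)}} is quasianalytic); and (c) inf_{k≥1} (M_k²/M_{2k})^{1/k} = 0 (so that C_{M²} ⊊ C_{M^{(2)}}). -/
/-! Write `M k = ∏ i < k, g i` with `g ≥ 1` nondecreasing, so that `M` is nondecreasing and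
logarithmically convex with quotients `g k`. Since `M (2k+2) ≤ g (2k+1) ^ (2k+2)`, the series in (b)
dominates `∑ 1 / ((k+2) g(2k+1)²)`; since `M k ^ 2 / M (2k) ≤ (g (k-1) / g k) ^ k`, condition (c)
follows once `g` has arbitrarily large multiplicative jumps.

Take `g` to be a step function, equal to `2 ^ (j²)` on `[N j, N (j+1))`. Its jump at `N (j+1)` is
`2 ^ (2j+1)`, which is unbounded. The harmonic series diverges, so `N (j+1)` can be chosen so large
that the `j`-th step alone contributes at least `1` to the series in (b), which then violates the
Cauchy criterion. Choosing `N j ≥ j²` gives `g k ≤ 2 ^ k`, hence (a). -/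

open Real Filter Topology
open scoped Classical
noncomputable section
/-- Divergence of the harmonic series: from any starting point `a`, some finite section has sum at
least `C`, and its end can be taken beyond any prescribed `b`. -/
lemma exists_harmonic_block (a b : ℕ) (C : ℝ) :
    ∃ n, b ≤ n ∧ C ≤ ∑ k ∈ Finset.Ico a n, 1 / ((k : ℝ) + 2) := by
  have hns : ¬ Summable (fun k : ℕ => 1 / ((k : ℝ) + 2)) := by
    have h := (summable_nat_add_iff (f := fun n : ℕ => 1 / (n : ℝ)) 2).not.mpr
      Real.not_summable_one_div_natCast
    simpa using h
  have ht := (not_summable_iff_tendsto_nat_atTop_of_nonneg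
    (fun k : ℕ => by positivity : ∀ k : ℕ, 0 ≤ 1 / ((k : ℝ) + 2))).mp hns
  obtain ⟨n, hn, han, hbn⟩ := ((ht.eventually_ge_atTop
    (C + ∑ k ∈ Finset.range a, 1 / ((k : ℝ) + 2))).and
      ((eventually_ge_atTop a).and (eventually_ge_atTop b))).exists
  refine ⟨n, hbn, ?_⟩
  rw [Finset.sum_Ico_eq_sub _ han]
  linarith

/-- An `n ≥ a + j` for which `∑ 1 / (k+2)` over `[a, n)` is at least `(2 ^ (j²))²`. The `j`-th step,
starting at `a`, extends up to `2n`, because (b) involves `g (2k+1)` for `k < n`. -/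
def blockEnd (a j : ℕ) : ℕ := (exists_harmonic_block a (a + j) ((2 ^ (j ^ 2)) ^ 2)).choose

/-- The point `N j` at which the `j`-th step starts. -/
def stepStart : ℕ → ℕ
  | 0 => 0
  | j + 1 => 2 * blockEnd (stepStart j) j + 1

lemma blockEnd_ge (a j : ℕ) : a + j ≤ blockEnd a j :=
  (exists_harmonic_block a (a + j) ((2 ^ (j ^ 2)) ^ 2)).choose_spec.1

lemma blockEnd_sum (a j : ℕ) :
    ((2 : ℝ) ^ (j ^ 2)) ^ 2 ≤ ∑ k ∈ Finset.Ico a (blockEnd a j), 1 / ((k : ℝ) + 2) :=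
  (exists_harmonic_block a (a + j) ((2 ^ (j ^ 2)) ^ 2)).choose_spec.2

lemma stepStart_strictMono : StrictMono stepStart := by
  refine strictMono_nat_of_lt_succ fun j => ?_
  have := blockEnd_ge (stepStart j) j
  simp only [stepStart]
  omega

lemma sq_le_stepStart (j : ℕ) : j ^ 2 ≤ stepStart j := by
  induction j with
  | zero => simp
  | succ j ih =>
    have := blockEnd_ge (stepStart j) j
    simp only [stepStart]
    nlinarith

/-- The index of the step containing `k`. -/
def stepIdx (k : ℕ) : ℕ := Nat.findGreatest (fun j => stepStart j ≤ k) k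

lemma stepStart_stepIdx_le (k : ℕ) : stepStart (stepIdx k) ≤ k :=
  Nat.findGreatest_spec (P := fun j => stepStart j ≤ k) (Nat.zero_le k) (Nat.zero_le k)

lemma le_stepIdx {j k : ℕ} (h : stepStart j ≤ k) : j ≤ stepIdx k :=
  Nat.le_findGreatest ((stepStart_strictMono.le_apply).trans h) h

lemma stepIdx_eq {j k : ℕ} (h : stepStart j ≤ k) (h' : k < stepStart (j + 1)) :
    stepIdx k = j := by
  refine le_antisymm ?_ (le_stepIdx h)
  exact Nat.lt_succ_iff.mp (stepStart_strictMono.lt_iff_lt.mp ((stepStart_stepIdx_le k).trans_lt h'))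

lemma stepIdx_mono : Monotone stepIdx := fun _ _ h =>
  le_stepIdx ((stepStart_stepIdx_le _).trans h)

/-- The step function `g`, the sequence of quotients of `M`. -/
def stepQuot (k : ℕ) : ℝ := 2 ^ (stepIdx k ^ 2)

lemma stepQuot_mono : Monotone stepQuot := fun _ _ h =>
  pow_le_pow_right₀ one_le_two (Nat.pow_le_pow_left (stepIdx_mono h) 2)

lemma one_le_stepQuot (k : ℕ) : 1 ≤ stepQuot k := one_le_pow₀ one_le_two

lemma stepQuot_pos (k : ℕ) : 0 < stepQuot k := zero_lt_one.trans_le (one_le_stepQuot k)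

lemma stepQuot_le (k : ℕ) : stepQuot k ≤ 2 ^ k :=
  pow_le_pow_right₀ one_le_two ((sq_le_stepStart _).trans (stepStart_stepIdx_le k))

/-- The weight sequence `M`. -/
def weight (k : ℕ) : ℝ := ∏ i ∈ Finset.range k, stepQuot i

lemma weight_pos (k : ℕ) : 0 < weight k := Finset.prod_pos fun i _ => stepQuot_pos i

lemma weight_succ (k : ℕ) : weight (k + 1) = weight k * stepQuot k := Finset.prod_range_succ _ _

lemma weight_ratio (k : ℕ) : weight (k + 1) / weight k = stepQuot k := by
  rw [weight_succ, mul_div_cancel_left₀ _ (weight_pos k).ne']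

lemma weight_succ_le (k : ℕ) : weight (k + 1) ≤ stepQuot k ^ (k + 1) := by
  calc weight (k + 1) ≤ ∏ _i ∈ Finset.range (k + 1), stepQuot k :=
        Finset.prod_le_prod (fun i _ => (stepQuot_pos i).le) fun i hi =>
          stepQuot_mono (Nat.lt_succ_iff.mp (Finset.mem_range.mp hi))
    _ = stepQuot k ^ (k + 1) := by simp

lemma weight_mul_pow_le (k n : ℕ) : weight k * stepQuot k ^ n ≤ weight (k + n) := by
  induction n with
  | zero => simp
  | succ n ih =>
    rw [← add_assoc, weight_succ, pow_succ, ← mul_assoc]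
    exact mul_le_mul ih (stepQuot_mono (Nat.le_add_right k n)) (stepQuot_pos k).le
      (weight_pos _).le

lemma not_summable_weight : ¬ Summable (fun k : ℕ =>
    1 / (((k : ℝ) + 2) * weight (2 * (k + 1)) ^ (((k : ℝ) + 1)⁻¹))) := by
  intro hs
  obtain ⟨s, hs⟩ := summable_iff_vanishing_norm.mp hs 1 one_pos
  -- A step starting beyond the exceptional finite set `s`.
  obtain ⟨b, hb⟩ := s.bddAbove
  set j := b + 1 with hj
  have hbj : b < stepStart j := (Nat.lt_succ_self b).trans_le stepStart_strictMono.le_apply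
  have hdisj : Disjoint (Finset.Ico (stepStart j) (blockEnd (stepStart j) j)) s := by
    rw [Finset.disjoint_left]
    intro k hk hks
    have h1 := hb hks
    have h2 := (Finset.mem_Ico.mp hk).1
    omega
  have hlt := (le_abs_self _).trans_lt (hs _ hdisj)
  refine absurd hlt (not_lt.mpr ?_)
  have hR : (0 : ℝ) < (2 ^ (j ^ 2)) ^ 2 := by positivity
  calc (1 : ℝ) ≤ (∑ k ∈ Finset.Ico (stepStart j) (blockEnd (stepStart j) j),
          1 / ((k : ℝ) + 2)) / (2 ^ (j ^ 2)) ^ 2 := (one_le_div hR).mpr (blockEnd_sum _ _)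
    _ ≤ _ := by
      rw [Finset.sum_div]
      refine Finset.sum_le_sum fun k hk => ?_
      rw [Finset.mem_Ico] at hk
      have hidx : stepIdx (2 * k + 1) = j := by
        refine stepIdx_eq (by omega) ?_
        simp only [stepStart]
        omega
      have hg : stepQuot (2 * k + 1) = 2 ^ (j ^ 2) := by rw [stepQuot, hidx]
      have hw : weight (2 * (k + 1)) ^ (((k : ℝ) + 1)⁻¹) ≤ (2 ^ (j ^ 2)) ^ 2 := by
        have h1 : weight (2 * (k + 1)) ≤ (((2 : ℝ) ^ (j ^ 2)) ^ 2) ^ (k + 1) := by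
          rw [← hg, ← pow_mul]
          exact weight_succ_le (2 * k + 1)
        refine (Real.rpow_le_rpow (weight_pos _).le h1 (by positivity)).trans_eq ?_
        have := Real.pow_rpow_inv_natCast hR.le (Nat.succ_ne_zero k)
        simpa using this
      rw [div_div]
      have := Real.rpow_pos_of_pos (weight_pos (2 * (k + 1))) (((k : ℝ) + 1)⁻¹)
      gcongr

lemma weight_sq_div_small (ε : ℝ) (hε : 0 < ε) :
    ∃ k : ℕ, 1 ≤ k ∧ (weight k ^ 2 / weight (2 * k)) ^ ((k : ℝ)⁻¹) < ε := by
  obtain ⟨j, hj⟩ := exists_pow_lt_of_lt_one hε (by norm_num : (1 / 2 : ℝ) < 1)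
  -- At `k = n + 1 = N (j+1)` the quotient jumps by the factor `2 ^ (2j+1)`.
  obtain ⟨n, hn⟩ : ∃ n, stepStart (j + 1) = n + 1 := ⟨2 * blockEnd (stepStart j) j, rfl⟩
  have hlt := stepStart_strictMono (Nat.lt_succ_self j)
  have hlt' := stepStart_strictMono (Nat.lt_succ_self (j + 1))
  simp only [Nat.succ_eq_add_one] at hlt hlt'
  have hg0 : stepQuot n = 2 ^ (j ^ 2) := by
    rw [stepQuot, stepIdx_eq (by omega : stepStart j ≤ n) (by omega)]
  have hg1 : stepQuot (n + 1) = 2 ^ ((j + 1) ^ 2) := by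
    rw [stepQuot, stepIdx_eq (j := j + 1) (by omega) (by omega)]
  refine ⟨n + 1, by omega, lt_of_le_of_lt ?_ hj⟩
  have hbound : weight (n + 1) ^ 2 / weight (2 * (n + 1)) ≤ ((1 / 2 : ℝ) ^ j) ^ (n + 1) := by
    have h1 := weight_succ_le n
    have h2 := weight_mul_pow_le (n + 1) (n + 1)
    rw [← two_mul] at h2
    rw [div_le_iff₀ (weight_pos _)]
    have h3 : stepQuot n ≤ (1 / 2 : ℝ) ^ j * stepQuot (n + 1) := by
      rw [hg0, hg1, one_div, inv_pow, inv_mul_eq_div, le_div_iff₀ (by positivity), ← pow_add]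
      exact pow_le_pow_right₀ one_le_two (by nlinarith)
    calc weight (n + 1) ^ 2 = weight (n + 1) * weight (n + 1) := sq _
      _ ≤ weight (n + 1) * ((1 / 2 : ℝ) ^ j * stepQuot (n + 1)) ^ (n + 1) := by
          refine mul_le_mul_of_nonneg_left (h1.trans ?_) (weight_pos _).le
          exact pow_le_pow_left₀ (stepQuot_pos n).le h3 _
      _ = ((1 / 2 : ℝ) ^ j) ^ (n + 1) * (weight (n + 1) * stepQuot (n + 1) ^ (n + 1)) := by
          rw [mul_pow]; ring
      _ ≤ _ := mul_le_mul_of_nonneg_left h2 (by positivity)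
  refine (Real.rpow_le_rpow (div_nonneg (sq_nonneg _) (weight_pos _).le) hbound
    (by positivity)).trans_eq ?_
  exact Real.pow_rpow_inv_natCast (by positivity) (Nat.succ_ne_zero n)

/-- Proposition 1.3: there is a Denjoy-Carleman class `C_M` closed under differentiation
such that `C_{M^{(2)}}` is quasianalytic and `C_{M²} ⊊ C_{M^{(2)}}`.
The quasianalyticity condition `Σ_{k≥1} 1/((k+1) M_{2k}^{1/k}) = ∞` is written with the
sum reindexed over `k ∈ ℕ` via `k ↦ k+1`. -/
theorem exists_class_with_square_ne_shift :
    ∃ M : ℕ → ℝ, (∀ k, 0 < M k) ∧ Monotone M ∧ M 0 = 1 ∧ LogConvexSeq M ∧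
      (∃ B : ℝ, ∀ k : ℕ, (M (k + 1) / M k) ^ ((k : ℝ)⁻¹) ≤ B) ∧
      (¬ Summable (fun k : ℕ =>
        1 / (((k : ℝ) + 2) * M (2 * (k + 1)) ^ (((k : ℝ) + 1)⁻¹)))) ∧
      (∀ ε > (0 : ℝ), ∃ k : ℕ, 1 ≤ k ∧ (M k ^ 2 / M (2 * k)) ^ ((k : ℝ)⁻¹) < ε) := by
  refine ⟨weight, weight_pos, ?_, by simp [weight], ?_, ⟨2, fun k => ?_⟩, not_summable_weight,
    weight_sq_div_small⟩
  · refine monotone_nat_of_le_succ fun k => ?_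
    rw [weight_succ]
    exact le_mul_of_one_le_right (weight_pos k).le (one_le_stepQuot k)
  · intro a b h
    simpa only [weight_ratio] using stepQuot_mono h
  · rw [weight_ratio]
    -- At `k = 0` the exponent is the junk value `0⁻¹ = 0`, and the power is `1`.
    rcases Nat.eq_zero_or_pos k with rfl | hk
    · simp
    · refine (Real.rpow_le_rpow (stepQuot_pos k).le (stepQuot_le k) (by positivity)).trans_eq ?_
      exact Real.pow_rpow_inv_natCast zero_le_two hk.ne'
end
end

section
/- Let M = (M_k) be a logarithmically convex sequence of positive real numbers with M_0 = 1. Then inf_{k≥1} (M_k²/M_{2k})^{1/k} > 0 (equivalently, C_{M²} = C_{M^{(2)}}) if and only if inf_{k≥1} M_k^{1+1/k}/M_{k+1} > 0. -/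
/-!
Put `a k = log (M k)`, so that `a 0 = 0` and the increments `a (k + 1) - a k` are nondecreasing.
After taking logarithms the two conditions say that, for some constant `C ≥ 0` and all `k ≥ 1`,

* `a (2 * k) - 2 * a k ≤ C * k`,
* `a (k + 1) - a k ≤ a k / k + C`.

The first gives the second because convexity yields `k * (a (k + 1) - a k) ≤ a (2 * k) - a k`.
Conversely, the second says that the averages `a n / n` grow by at most `C / (n + 1)` from `n` to
`n + 1`, hence by at most `C` from `k` to `2 * k`; multiplying by `2 * k` gives the first condition
with constant `2 * C`. This half needs no convexity.
-/

open Real Filter Topology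
open scoped Classical
noncomputable section
/-- A positive function has a positive lower bound on `k ≥ 1` iff its logarithm is bounded below
there; the bound `-C` may be taken nonpositive. -/
lemma exists_pos_le_iff_log (f : ℕ → ℝ) (hf : ∀ k, 0 < f k) :
    (∃ c > (0 : ℝ), ∀ k : ℕ, 1 ≤ k → c ≤ f k) ↔
      ∃ C : ℝ, 0 ≤ C ∧ ∀ k : ℕ, 1 ≤ k → -C ≤ Real.log (f k) := by
  constructor
  · rintro ⟨c, hc, h⟩
    refine ⟨|Real.log c|, abs_nonneg _, fun k hk => ?_⟩
    exact (neg_abs_le _).trans (Real.log_le_log hc (h k hk))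
  · rintro ⟨C, -, h⟩
    exact ⟨Real.exp (-C), Real.exp_pos _, fun k hk => (Real.le_log_iff_exp_le (hf k)).1 (h k hk)⟩

/-- Each of the `j` increments after index `k` is at least the one at `k`. -/
lemma add_mul_increment_le (a : ℕ → ℝ) (ha : Monotone fun k => a (k + 1) - a k) (k j : ℕ) :
    a k + j * (a (k + 1) - a k) ≤ a (k + j) := by
  induction j with
  | zero => simp
  | succ j ih =>
    have h : a (k + 1) - a k ≤ a (k + j + 1) - a (k + j) := ha (Nat.le_add_right k j)
    rw [← Nat.add_assoc]
    push_cast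
    linarith

/-- Growth of the averages `a n / n`: each of the `j` steps after `k` contributes at most
`C / k`. -/
lemma average_le (a : ℕ → ℝ) (C : ℝ) (hC : 0 ≤ C)
    (h : ∀ k : ℕ, 1 ≤ k → a (k + 1) - a k ≤ a k / k + C) (k : ℕ) (hk : 1 ≤ k) (j : ℕ) :
    a (k + j) / ((k + j : ℕ) : ℝ) ≤ a k / k + j * (C / k) := by
  induction j with
  | zero => simp
  | succ j ih =>
    have hk0 : (0 : ℝ) < k := by exact_mod_cast hk
    have hn : 1 ≤ k + j := by omega
    have hn0 : (0 : ℝ) < ((k + j : ℕ) : ℝ) := by exact_mod_cast hn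
    have hstep : a (k + j + 1) / ((k + j + 1 : ℕ) : ℝ)
        ≤ a (k + j) / ((k + j : ℕ) : ℝ) + C / ((k + j + 1 : ℕ) : ℝ) := by
      have h1 := h (k + j) hn
      have hd : a (k + j) = a (k + j) / ((k + j : ℕ) : ℝ) * ((k + j : ℕ) : ℝ) := by
        field_simp
      rw [div_le_iff₀ (by positivity), add_mul, div_mul_cancel₀ _ (by positivity),
        Nat.cast_succ, mul_add, ← hd]
      linarith
    have hle : C / ((k + j + 1 : ℕ) : ℝ) ≤ C / k := by
      apply div_le_div_of_nonneg_left hC hk0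
      exact_mod_cast (by omega : k ≤ k + j + 1)
    rw [← Nat.add_assoc, Nat.cast_succ j]
    linarith

/-- Lemma 2.1: for a log-convex sequence `M` with `M₀ = 1`,
`inf_{k≥1} (M_k²/M_{2k})^{1/k} > 0` if and only if `inf_{k≥1} M_k^{1+1/k}/M_{k+1} > 0`. -/
theorem square_eq_shift_iff (M : ℕ → ℝ) (hMpos : ∀ k, 0 < M k)
    (hMlc : LogConvexSeq M) (hM0 : M 0 = 1) :
    (∃ c > (0 : ℝ), ∀ k : ℕ, 1 ≤ k → c ≤ (M k ^ 2 / M (2 * k)) ^ ((k : ℝ)⁻¹)) ↔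
    (∃ c > (0 : ℝ), ∀ k : ℕ, 1 ≤ k → c ≤ M k ^ (1 + (k : ℝ)⁻¹) / M (k + 1)) := by
  have hp1 : ∀ k, 0 < M k ^ 2 / M (2 * k) := fun k => div_pos (pow_pos (hMpos k) 2) (hMpos _)
  have hp2 : ∀ k, 0 < M k ^ (1 + (k : ℝ)⁻¹) := fun k => Real.rpow_pos_of_pos (hMpos k) _
  rw [exists_pos_le_iff_log _ fun k => Real.rpow_pos_of_pos (hp1 k) _,
    exists_pos_le_iff_log _ fun k => div_pos (hp2 k) (hMpos _)]
  obtain ⟨a, ha⟩ : ∃ a : ℕ → ℝ, ∀ k, Real.log (M k) = a k := ⟨_, fun _ => rfl⟩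
  have hlog1 : ∀ k : ℕ, Real.log ((M k ^ 2 / M (2 * k)) ^ ((k : ℝ)⁻¹))
      = (2 * a k - a (2 * k)) / k := fun k => by
    rw [Real.log_rpow (hp1 k), Real.log_div (pow_pos (hMpos k) 2).ne' (hMpos _).ne',
      Real.log_pow, ha, ha, inv_mul_eq_div, Nat.cast_ofNat]
  have hlog2 : ∀ k : ℕ, Real.log (M k ^ (1 + (k : ℝ)⁻¹) / M (k + 1))
      = a k + a k / k - a (k + 1) := fun k => by
    rw [Real.log_div (hp2 k).ne' (hMpos _).ne', Real.log_rpow (hMpos k), ha, ha]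
    ring
  have hconv : Monotone fun k => a (k + 1) - a k := fun i j hij => by
    have h := Real.log_le_log (div_pos (hMpos _) (hMpos _)) (hMlc hij)
    simpa only [Real.log_div (hMpos _).ne' (hMpos _).ne', ha] using h
  simp only [hlog1, hlog2]
  constructor
  · rintro ⟨C, hC, h⟩
    refine ⟨C, hC, fun k hk => ?_⟩
    have hk0 : (0 : ℝ) < k := by exact_mod_cast hk
    have h1 := h k hk
    have h2 := add_mul_increment_le a hconv k k
    rw [le_div_iff₀ hk0] at h1
    rw [← two_mul] at h2
    have h3 : a (k + 1) - a k ≤ (a k + C * k) / k := by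
      rw [le_div_iff₀ hk0]
      linarith
    rw [add_div, mul_div_cancel_right₀ _ hk0.ne'] at h3
    linarith
  · rintro ⟨C, hC, h⟩
    refine ⟨2 * C, by positivity, fun k hk => ?_⟩
    have hk0 : (0 : ℝ) < k := by exact_mod_cast hk
    have h1 := average_le a C hC (fun k hk => by linarith [h k hk]) k hk k
    rw [← two_mul, mul_div_cancel₀ _ hk0.ne', Nat.cast_mul, Nat.cast_ofNat,
      div_le_iff₀ (by positivity)] at h1
    rw [le_div_iff₀ hk0]
    have h2 : (a k / k + C) * (2 * k) = 2 * a k + 2 * C * k := by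
      field_simp
    linarith
end
end

section
/- Let M = (M_k) be a logarithmically convex sequence of positive real numbers with M_0 = 1, and set m_k := M_{k+1}/M_k for k ∈ ℕ. Then for every k ∈ ℕ, the Ostrowski function φ_M satisfies φ_M(m_k) = m_k^{k+2}/M_k; equivalently, m_k^{k+2}/φ_M(m_k) = M_k, i.e., sup_{n≥0} m_k^{n+2}/M_n = m_k^{k+2}/M_k. -/
/-! With `r = m_k`, consecutive terms of `a n = r ^ (n + 2) / M n` satisfy
`a (n + 1) / a n = r / m_n`. As `m` is nondecreasing, `a` increases up to `k` and decreases from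
`k` on, so its supremum is attained at `n = k`. -/

open Real Filter Topology
open scoped Classical
noncomputable section
/-- The terms of the Ostrowski supremum increase from `n` to `n + 1` when `m_n ≤ r`. -/
theorem ostrowski_term_le_succ (M : ℕ → ℝ) (hMpos : ∀ k, 0 < M k) (r : ℝ) (hr : 0 < r) (n : ℕ)
    (h : M (n + 1) / M n ≤ r) : r ^ (n + 2) / M n ≤ r ^ (n + 1 + 2) / M (n + 1) := by
  rw [div_le_iff₀ (hMpos n)] at h
  rw [div_le_div_iff₀ (hMpos _) (hMpos _)]
  calc r ^ (n + 2) * M (n + 1) ≤ r ^ (n + 2) * (r * M n) := by gcongr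
    _ = r ^ (n + 1 + 2) * M n := by ring

/-- The terms of the Ostrowski supremum decrease from `n` to `n + 1` when `r ≤ m_n`. -/
theorem ostrowski_term_succ_le (M : ℕ → ℝ) (hMpos : ∀ k, 0 < M k) (r : ℝ) (hr : 0 < r) (n : ℕ)
    (h : r ≤ M (n + 1) / M n) : r ^ (n + 1 + 2) / M (n + 1) ≤ r ^ (n + 2) / M n := by
  rw [le_div_iff₀ (hMpos n)] at h
  rw [div_le_div_iff₀ (hMpos _) (hMpos _)]
  calc r ^ (n + 1 + 2) * M n = r ^ (n + 2) * (r * M n) := by ring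
    _ ≤ r ^ (n + 2) * M (n + 1) := by gcongr

/-- Lemma 3.1 (property of the Ostrowski function): with `m_k = M_{k+1}/M_k`,
`φ_M(m_k) = sup_{n≥0} m_k^{n+2}/M_n = m_k^{k+2}/M_k`. -/
theorem ostrowski_at_mk (M : ℕ → ℝ) (hMpos : ∀ k, 0 < M k)
    (hMlc : LogConvexSeq M) (hM0 : M 0 = 1) :
    ∀ k : ℕ, ostrowski M (M (k + 1) / M k) = (M (k + 1) / M k) ^ (k + 2) / M k := by
  intro k
  have hr : 0 < M (k + 1) / M k := div_pos (hMpos _) (hMpos _)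
  have key : ∀ n, (M (k + 1) / M k) ^ (n + 2) / M n ≤ (M (k + 1) / M k) ^ (k + 2) / M k := by
    intro n
    rcases le_total k n with h | h
    · induction n, h using Nat.le_induction with
      | base => exact le_rfl
      | succ n hn ih => exact (ostrowski_term_succ_le M hMpos _ hr n (hMlc hn)).trans ih
    · induction h using Nat.decreasingInduction with
      | self => exact le_rfl
      | of_succ n hn ih => exact (ostrowski_term_le_succ M hMpos _ hr n (hMlc hn.le)).trans ih
  exact le_antisymm (ciSup_le key)
    (le_ciSup (f := fun n : ℕ => (M (k + 1) / M k) ^ (n + 2) / M n)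
      ⟨_, by rintro _ ⟨n, rfl⟩; exact key n⟩ k)
end
end

section
/- For every c > 0, every x = (x₁,x₂) ∈ ℝ², and every multi-index α = (α₁,α₂) ∈ ℕ², the function f(x) = 1/(c + x₁² + x₂²) satisfies |∂^α f(x)|/α! ≤ 8·8^{|α|}/(c + x₁² + x₂²)^{1+|α|/2}. -/
/-!
Write `Q(y) = c + y₁² + y₂²` and `f = 1 / Q`. Applying `∂₁^m ∂₂^n` to `Q * f = 1` and using the
Leibniz rule, in which only derivatives of `Q` of order at most two survive, gives for
`(m, n) ≠ (0, 0)` the recursion (`recursion`)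

`Q u(m,n) + 2 m x₁ u(m-1,n) + m (m-1) u(m-2,n) + 2 n x₂ u(m,n-1) + n (n-1) u(m,n-2) = 0`

for `u(m,n) = ∂₁^m ∂₂^n f`. Since `|x₁|, |x₂| ≤ s := √Q`, strong induction on `m + n` yields
`|u(m,n)| s^(m+n+2) ≤ m! n! 8^(m+n)`, the induction step being `4 / 8 + 2 / 64 ≤ 1`
(`key_bound`). This is the claim, with a factor 8 to spare.
-/

open Real Filter Topology
open scoped Classical
noncomputable section
open scoped ContDiff

/-- The derivative of `f` in the direction `v`; `pd1` and `pd2` are `dirD (1, 0)` and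
`dirD (0, 1)`. -/
def dirD (v : ℝ × ℝ) (f : ℝ × ℝ → ℝ) : ℝ × ℝ → ℝ := fun x => fderiv ℝ f x v

lemma pd1_eq : pd1 = dirD (1, 0) := rfl

lemma pd2_eq : pd2 = dirD (0, 1) := rfl

lemma dirD_smooth (v : ℝ × ℝ) {f : ℝ × ℝ → ℝ} (hf : ContDiff ℝ ∞ f) :
    ContDiff ℝ ∞ (dirD v f) :=
  (hf.fderiv_right (m := ∞) (by simp)).clm_apply contDiff_const

lemma dirD_iter_smooth (v : ℝ × ℝ) {f : ℝ × ℝ → ℝ} (hf : ContDiff ℝ ∞ f) (m : ℕ) :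
    ContDiff ℝ ∞ ((dirD v)^[m] f) := by
  induction m with
  | zero => exact hf
  | succ m ih => rw [Function.iterate_succ_apply']; exact dirD_smooth v ih

lemma smooth_diff {f : ℝ × ℝ → ℝ} (hf : ContDiff ℝ ∞ f) : Differentiable ℝ f :=
  hf.differentiable (by simp)

lemma smooth_add {f g : ℝ × ℝ → ℝ} (hf : ContDiff ℝ ∞ f) (hg : ContDiff ℝ ∞ g) :
    ContDiff ℝ ∞ (f + g) := hf.add hg

lemma smooth_mul {f g : ℝ × ℝ → ℝ} (hf : ContDiff ℝ ∞ f) (hg : ContDiff ℝ ∞ g) :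
    ContDiff ℝ ∞ (f * g) := hf.mul hg

lemma dirD_add (v : ℝ × ℝ) {f g : ℝ × ℝ → ℝ} (hf : ContDiff ℝ ∞ f) (hg : ContDiff ℝ ∞ g) :
    dirD v (f + g) = dirD v f + dirD v g := by
  funext x
  simp [dirD, fderiv_add (smooth_diff hf x) (smooth_diff hg x)]

lemma dirD_mul (v : ℝ × ℝ) {f g : ℝ × ℝ → ℝ} (hf : ContDiff ℝ ∞ f) (hg : ContDiff ℝ ∞ g) :
    dirD v (f * g) = f * dirD v g + dirD v f * g := by
  funext x
  simp [dirD, fderiv_mul (smooth_diff hf x) (smooth_diff hg x), mul_comm]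

lemma dirD_const (v : ℝ × ℝ) (a : ℝ) : dirD v (fun _ => a) = 0 := by
  funext x
  simp [dirD]

lemma dirD_iter_zero (v : ℝ × ℝ) (m : ℕ) : (dirD v)^[m] 0 = 0 :=
  Function.iterate_fixed (dirD_const v 0) m

lemma dirD_iter_add (v : ℝ × ℝ) {f g : ℝ × ℝ → ℝ} (hf : ContDiff ℝ ∞ f) (hg : ContDiff ℝ ∞ g)
    (m : ℕ) : (dirD v)^[m] (f + g) = (dirD v)^[m] f + (dirD v)^[m] g := by
  induction m with
  | zero => rfl
  | succ m ih =>
    simp only [Function.iterate_succ_apply']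
    rw [ih, dirD_add v (dirD_iter_smooth v hf m) (dirD_iter_smooth v hg m)]

/-- A factor that is constant in the direction `v` can be pulled out. -/
lemma dirD_iter_mul_of_zero (v : ℝ × ℝ) {p g : ℝ × ℝ → ℝ} (hp : ContDiff ℝ ∞ p)
    (hg : ContDiff ℝ ∞ g) (h0 : dirD v p = 0) (m : ℕ) :
    (dirD v)^[m] (p * g) = p * (dirD v)^[m] g := by
  induction m with
  | zero => rfl
  | succ m ih =>
    simp only [Function.iterate_succ_apply']
    rw [ih, dirD_mul v hp (dirD_iter_smooth v hg m), h0, zero_mul, add_zero]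

/-- The Leibniz rule for a factor `P` that is monic quadratic in the direction `v`. The truncated
subtractions are harmless, as the corresponding terms have coefficient zero. -/
lemma dirD_iter_mul_quadratic (v : ℝ × ℝ) {P L g : ℝ × ℝ → ℝ} (hP : ContDiff ℝ ∞ P)
    (hL : ContDiff ℝ ∞ L) (hg : ContDiff ℝ ∞ g) (hPL : dirD v P = L)
    (hL2 : dirD v L = fun _ => 2) (m : ℕ) :
    (dirD v)^[m] (P * g) = P * (dirD v)^[m] g + ((fun _ => (m : ℝ)) * (L * (dirD v)^[m - 1] g)
      + (fun _ => (m : ℝ) * (m - 1)) * (dirD v)^[m - 2] g) := by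
  induction m with
  | zero => funext x; simp
  | succ m ih =>
    have hs := fun k => dirD_iter_smooth v hg k
    have hc := fun a : ℝ => (contDiff_const : ContDiff ℝ ∞ (fun _ : ℝ × ℝ => a))
    rw [Function.iterate_succ_apply', ih, dirD_add v (smooth_mul hP (hs _))
        (smooth_add (smooth_mul (hc _) (smooth_mul hL (hs _))) (smooth_mul (hc _) (hs _))),
      dirD_add v (smooth_mul (hc _) (smooth_mul hL (hs _))) (smooth_mul (hc _) (hs _)),
      dirD_mul v hP (hs _), dirD_mul v (hc _) (smooth_mul hL (hs _)), dirD_mul v hL (hs _),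
      dirD_mul v (hc _) (hs _), dirD_const, dirD_const, hPL, hL2]
    simp only [← Function.iterate_succ_apply' (dirD v)]
    funext x
    rcases m with _ | _ | m
    · simp
    · simp; ring
    · simp; ring

section Estimate

variable (c : ℝ)

/-- The denominator `c + y₁² + y₂²`. -/
def quadQ : ℝ × ℝ → ℝ := fun y => c + y.1 ^ 2 + y.2 ^ 2

lemma quadQ_smooth : ContDiff ℝ ∞ (quadQ c) := by
  unfold quadQ; fun_prop

lemma quadQ_pos (hc : 0 < c) (y : ℝ × ℝ) : 0 < quadQ c y := by
  unfold quadQ; positivity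

lemma hasFDerivAt_quadQ (x : ℝ × ℝ) : HasFDerivAt (quadQ c)
    ((2 * x.1) • ContinuousLinearMap.fst ℝ ℝ ℝ + (2 * x.2) • ContinuousLinearMap.snd ℝ ℝ ℝ) x := by
  have h1 := (hasFDerivAt_fst (𝕜 := ℝ) (p := x)).pow 2
  have h2 := (hasFDerivAt_snd (𝕜 := ℝ) (p := x)).pow 2
  refine ((h1.const_add c).add h2).congr_fderiv ?_
  ext <;> simp

lemma dirD_quadQ (v : ℝ × ℝ) :
    dirD v (quadQ c) = fun y => 2 * y.1 * v.1 + 2 * y.2 * v.2 := by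
  funext x
  simp [dirD, (hasFDerivAt_quadQ c x).fderiv]

lemma dirD_two_fst (v : ℝ × ℝ) : dirD v (fun y => 2 * y.1) = fun _ => 2 * v.1 := by
  funext x
  have h := (hasFDerivAt_fst (𝕜 := ℝ) (p := x)).const_mul 2
  simp [dirD, h.fderiv]

lemma dirD_two_snd (v : ℝ × ℝ) : dirD v (fun y => 2 * y.2) = fun _ => 2 * v.2 := by
  funext x
  have h := (hasFDerivAt_snd (𝕜 := ℝ) (p := x)).const_mul 2
  simp [dirD, h.fderiv]

/-- The recursion for the partial derivatives of `f = 1 / quadQ c`, obtained by differentiating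
`quadQ c * f = 1`. -/
lemma recursion {f : ℝ × ℝ → ℝ} (hf : ContDiff ℝ ∞ f) (hQf : quadQ c * f = fun _ => 1)
    (m n : ℕ) (hmn : m + n ≠ 0) (x : ℝ × ℝ) :
    quadQ c x * pd (m, n) f x + 2 * x.1 * (m * pd (m - 1, n) f x)
      + m * (m - 1) * pd (m - 2, n) f x + 2 * x.2 * (n * pd (m, n - 1) f x)
      + n * (n - 1) * pd (m, n - 2) f x = 0 := by
  have hs := fun k => dirD_iter_smooth (0, 1) hf k
  have hc := fun a : ℝ => (contDiff_const : ContDiff ℝ ∞ (fun _ : ℝ × ℝ => a))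
  have hL1 : ContDiff ℝ ∞ (fun y : ℝ × ℝ => 2 * y.1) := by fun_prop
  have hL2 : ContDiff ℝ ∞ (fun y : ℝ × ℝ => 2 * y.2) := by fun_prop
  have hQ := quadQ_smooth c
  have key : pd (m, n) (quadQ c * f) x = 0 := by
    have h1 : ∀ (v : ℝ × ℝ) (k : ℕ), k ≠ 0 → (dirD v)^[k] (fun _ => (1 : ℝ)) = 0 := by
      intro v k hk
      obtain ⟨k, rfl⟩ := Nat.exists_eq_succ_of_ne_zero hk
      rw [Function.iterate_succ_apply, dirD_const, dirD_iter_zero]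
    rw [hQf]
    simp only [pd, pd1_eq, pd2_eq]
    rcases Nat.eq_zero_or_pos n with rfl | hn
    · rw [Function.iterate_zero_apply, h1 _ _ (by omega)]; rfl
    · rw [h1 _ _ hn.ne', dirD_iter_zero]; rfl
  simp only [pd, pd1_eq, pd2_eq] at key ⊢
  rw [dirD_iter_mul_quadratic (0, 1) hQ hL2 hf (by rw [dirD_quadQ]; simp)
      (by rw [dirD_two_snd]; simp) n,
    dirD_iter_add _ (smooth_mul hQ (hs _))
      (smooth_add (smooth_mul (hc _) (smooth_mul hL2 (hs _))) (smooth_mul (hc _) (hs _))),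
    dirD_iter_add _ (smooth_mul (hc _) (smooth_mul hL2 (hs _))) (smooth_mul (hc _) (hs _)),
    dirD_iter_mul_of_zero _ (hc _) (smooth_mul hL2 (hs _)) (dirD_const _ _),
    dirD_iter_mul_of_zero _ hL2 (hs _) (by rw [dirD_two_snd]; funext; simp),
    dirD_iter_mul_of_zero _ (hc _) (hs _) (dirD_const _ _),
    dirD_iter_mul_quadratic (1, 0) hQ hL1 (hs _) (by rw [dirD_quadQ]; simp)
      (by rw [dirD_two_fst]; simp) m] at key
  simp only [Pi.add_apply, Pi.mul_apply] at key
  linarith [key]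

/-- The estimate in terms of `s = √(quadQ c x)`. Each of the four lower-order terms of the recursion
is bounded by a fraction of `E = m! n! 8^k`: the first-order ones by `2 * E / 8`, the second-order
ones by `E / 64`. -/
lemma key_bound {f : ℝ × ℝ → ℝ} (hf : ContDiff ℝ ∞ f) (hQf : quadQ c * f = fun _ => 1)
    (x : ℝ × ℝ) (s : ℝ) (hs : 0 < s) (hsQ : s ^ 2 = quadQ c x) (hx1 : |x.1| ≤ s)
    (hx2 : |x.2| ≤ s) (k : ℕ) : ∀ m n : ℕ, m + n = k →
    |pd (m, n) f x| * s ^ (k + 2) ≤ m.factorial * n.factorial * 8 ^ k := by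
  induction k using Nat.strong_induction_on with
  | _ k ih =>
  intro m n hmn
  rcases Nat.eq_zero_or_pos k with rfl | hk
  · obtain ⟨rfl, rfl⟩ : m = 0 ∧ n = 0 := by omega
    have h : quadQ c x * f x = 1 := congrFun hQf x
    have h2 : |f x| * s ^ 2 = 1 := by
      rw [← abs_of_pos (pow_pos hs 2), ← abs_mul, hsQ, mul_comm, h, abs_one]
    simp [pd, h2]
  set E : ℝ := m.factorial * n.factorial * 8 ^ k with hE
  have hE0 : 0 ≤ E := by positivity
  have hm1 : |m * pd (m - 1, n) f x| * s ^ (k + 1) * 8 ≤ E := by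
    rcases m with _ | m
    · simpa using hE0
    · obtain ⟨k, rfl⟩ : ∃ j, k = j + 1 := ⟨k - 1, by omega⟩
      have := mul_le_mul_of_nonneg_left (ih k (by omega) m n (by omega))
        (by positivity : (0 : ℝ) ≤ 8 * (m + 1 : ℕ))
      rw [abs_mul, Nat.abs_cast, hE, Nat.factorial_succ]
      push_cast at this ⊢
      ring_nf at this ⊢
      linarith
  have hn1 : |n * pd (m, n - 1) f x| * s ^ (k + 1) * 8 ≤ E := by
    rcases n with _ | n
    · simpa using hE0
    · obtain ⟨k, rfl⟩ : ∃ j, k = j + 1 := ⟨k - 1, by omega⟩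
      have := mul_le_mul_of_nonneg_left (ih k (by omega) m n (by omega))
        (by positivity : (0 : ℝ) ≤ 8 * (n + 1 : ℕ))
      rw [abs_mul, Nat.abs_cast, hE, Nat.factorial_succ]
      push_cast at this ⊢
      ring_nf at this ⊢
      linarith
  have hm2 : |m * (m - 1) * pd (m - 2, n) f x| * s ^ k * 64 ≤ E := by
    rcases m with _ | _ | m
    · simpa using hE0
    · simpa using hE0
    · obtain ⟨k, rfl⟩ : ∃ j, k = j + 2 := ⟨k - 2, by omega⟩
      have := mul_le_mul_of_nonneg_left (ih k (by omega) m n (by omega))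
        (by positivity : (0 : ℝ) ≤ 64 * ((m + 2) * (m + 1)))
      have e : (((m + 1 + 1 : ℕ) : ℝ) * (((m + 1 + 1 : ℕ) : ℝ) - 1)) = (m + 2) * (m + 1) := by
        push_cast; ring
      rw [e, abs_mul, abs_of_nonneg (by positivity : (0 : ℝ) ≤ (m + 2) * (m + 1)), hE,
        Nat.factorial_succ, Nat.factorial_succ]
      push_cast at this ⊢
      ring_nf at this ⊢
      linarith
  have hn2 : |n * (n - 1) * pd (m, n - 2) f x| * s ^ k * 64 ≤ E := by
    rcases n with _ | _ | n
    · simpa using hE0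
    · simpa using hE0
    · obtain ⟨k, rfl⟩ : ∃ j, k = j + 2 := ⟨k - 2, by omega⟩
      have := mul_le_mul_of_nonneg_left (ih k (by omega) m n (by omega))
        (by positivity : (0 : ℝ) ≤ 64 * ((n + 2) * (n + 1)))
      have e : (((n + 1 + 1 : ℕ) : ℝ) * (((n + 1 + 1 : ℕ) : ℝ) - 1)) = (n + 2) * (n + 1) := by
        push_cast; ring
      rw [e, abs_mul, abs_of_nonneg (by positivity : (0 : ℝ) ≤ (n + 2) * (n + 1)), hE,
        Nat.factorial_succ, Nat.factorial_succ]
      push_cast at this ⊢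
      ring_nf at this ⊢
      linarith
  have hrec := recursion c hf hQf m n (by omega) x
  rw [← hsQ] at hrec
  generalize pd (m, n) f x = u at *
  generalize (m : ℝ) * pd (m - 1, n) f x = a at *
  generalize (n : ℝ) * pd (m, n - 1) f x = b at *
  generalize (m : ℝ) * (m - 1) * pd (m - 2, n) f x = d at *
  generalize (n : ℝ) * (n - 1) * pd (m, n - 2) f x = e at *
  have habs : |u| * s ^ 2 ≤ 2 * s * |a| + |d| + 2 * s * |b| + |e| := by
    have h1 : |u| * s ^ 2 = |2 * x.1 * a + d + 2 * x.2 * b + e| := by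
      rw [← abs_of_pos (pow_pos hs 2), ← abs_mul, ← abs_neg]
      congr 1
      linarith
    have ha : |2 * x.1 * a| ≤ 2 * s * |a| := by
      rw [abs_mul, abs_mul, abs_two]; gcongr
    have hb : |2 * x.2 * b| ≤ 2 * s * |b| := by
      rw [abs_mul, abs_mul, abs_two]; gcongr
    rw [h1]
    refine (abs_add_le _ _).trans ?_
    gcongr
    refine (abs_add_le _ _).trans ?_
    gcongr
    refine (abs_add_le _ _).trans ?_
    gcongr
  have hfin := mul_le_mul_of_nonneg_right habs (pow_pos hs k).le
  ring_nf at hfin hm1 hn1 hm2 hn2 ⊢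
  linarith

end Estimate

/-- Lemma 3.3 (a priori estimate): for `c > 0` and `f(x) = 1/(c + x₁² + x₂²)`,
`|∂^α f(x)|/α! ≤ 8·8^{|α|}/(c + x₁² + x₂²)^{1+|α|/2}`. -/
theorem apriori_estimate (c : ℝ) (hc : 0 < c) (x : ℝ × ℝ) (α : ℕ × ℕ) :
    |pd α (fun y : ℝ × ℝ => 1 / (c + y.1 ^ 2 + y.2 ^ 2)) x| /
      (Nat.factorial α.1 * Nat.factorial α.2) ≤
    8 * 8 ^ (α.1 + α.2) / (c + x.1 ^ 2 + x.2 ^ 2) ^ (1 + ((α.1 + α.2 : ℕ) : ℝ) / 2) := by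
  obtain ⟨m, n⟩ := α
  have hpos := quadQ_pos c hc
  have hf : ContDiff ℝ ∞ (fun y : ℝ × ℝ => 1 / (c + y.1 ^ 2 + y.2 ^ 2)) :=
    contDiff_const.div (quadQ_smooth c) (fun y => (hpos y).ne')
  have hQf : quadQ c * (fun y : ℝ × ℝ => 1 / (c + y.1 ^ 2 + y.2 ^ 2)) = fun _ => 1 := by
    funext y
    exact mul_one_div_cancel (hpos y).ne'
  have hs : 0 < √(quadQ c x) := Real.sqrt_pos.2 (hpos x)
  have hsQ : √(quadQ c x) ^ 2 = quadQ c x := Real.sq_sqrt (hpos x).le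
  have hx1 : |x.1| ≤ √(quadQ c x) :=
    Real.abs_le_sqrt (by unfold quadQ; nlinarith [sq_nonneg x.2])
  have hx2 : |x.2| ≤ √(quadQ c x) :=
    Real.abs_le_sqrt (by unfold quadQ; nlinarith [sq_nonneg x.1])
  have hb := key_bound c hf hQf x _ hs hsQ hx1 hx2 (m + n) m n rfl
  have hpow : (c + x.1 ^ 2 + x.2 ^ 2) ^ (1 + ((m + n : ℕ) : ℝ) / 2)
      = √(quadQ c x) ^ (m + n + 2) := by
    change quadQ c x ^ (1 + ((m + n : ℕ) : ℝ) / 2) = _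
    rw [Real.sqrt_eq_rpow, ← Real.rpow_mul_natCast (hpos x).le]
    congr 1
    push_cast
    ring
  simp only [hpow]
  rw [div_le_div_iff₀ (by positivity) (by positivity)]
  have h0 : (0 : ℝ) ≤ m.factorial * n.factorial * 8 ^ (m + n) := by positivity
  linarith
end
end
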